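/- Let G = (V,E) be a connected loopless multigraph whose vertex set is partitioned into nonempty sets V_0, V_1, ..., V_k such that: each V_i (1 ≤ i ≤ k) is a clique of G; E_G(V_i,V_j) = ∅ for all 1 ≤ i < j ≤ k; and each component of G[M] is a star with center in V_0, where M_i = E_G(V_i,V_0) and M = M_1 ∪ ... ∪ M_k. Let U = V_1 ∪ ... ∪ V_k and let G•U be obtained from G by contracting all edges in each G[V_i], with v_i the vertex arising from V_i. Then for any N ⊆ E(G[V_0]): τ_G(M ∪ N) = (∏_{i=1}^k |V_i|^{|V_i| − 2 − |M_i|}) · Σ_{T ∈ ST_{G•U}(N)} ∏_{i=1}^k |V_i|^{|E_T(v_i)|}, where ST_{G•U}(N) is the set of spanning trees of G•U containing all edges of N and E_T(v_i) is the set of edges of T incident with v_i. -/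

import Mathlib

/-!
Spanning trees of multigraphs: common definitions.

A multigraph on a vertex type `V` with edge type `E` is given by an incidence
map `inc : E → Sym2 V` sending each edge to its (unordered) pair of endpoints.
-/

namespace PaperST

universe u v

/-- A multigraph on vertex type `V` with edge type `E`. -/
structure Multigraph (V : Type u) (E : Type v) where
  /-- the two (possibly equal) endpoints of each edge -/
  inc : E → Sym2 V

namespace Multigraph

variable {V : Type u} {E : Type v}

/-- One step along an edge of `T`. -/
def Step (G : Multigraph V E) (T : Set E) (u v : V) : Prop :=
  ∃ e ∈ T, G.inc e = s(u, v)

theorem step_symm (G : Multigraph V E) (T : Set E) : Symmetric (G.Step T) := by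
  rintro u v ⟨e, he, hinc⟩
  exact ⟨e, he, by rw [hinc]; exact Sym2.eq_swap⟩

/-- Reachability using only edges in `T`. -/
def Reach (G : Multigraph V E) (T : Set E) : V → V → Prop :=
  Relation.ReflTransGen (G.Step T)

/-- The spanning subgraph `G⟨T⟩` is connected. -/
def ConnectedOn (G : Multigraph V E) (T : Set E) : Prop :=
  ∀ u v : V, G.Reach T u v

/-- `G` is connected. -/
def Connected (G : Multigraph V E) : Prop :=
  G.ConnectedOn Set.univ

/-- `G` has no loops. -/
def Loopless (G : Multigraph V E) : Prop :=
  ∀ e : E, ¬ (G.inc e).IsDiag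

/-- A spanning tree of a (finite) multigraph: a connected spanning subgraph
with `|V| - 1` edges. -/
def IsSpanningTree (G : Multigraph V E) (T : Set E) : Prop :=
  G.ConnectedOn T ∧ T.ncard + 1 = Nat.card V

/-- The set `ST_G(M)` of spanning trees of `G` containing all edges of `M`. -/
def ST (G : Multigraph V E) (M : Set E) : Set (Set E) :=
  {T | G.IsSpanningTree T ∧ M ⊆ T}

/-- `τ_G(M)`: the number of spanning trees of `G` containing all edges of `M`. -/
noncomputable def tau (G : Multigraph V E) (M : Set E) : ℕ :=
  (G.ST M).ncard

/-- The spanning subgraph `G⟨W⟩` is a forest (no cycles): there are no loops in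
`W` and every edge of `W` is a bridge of `G⟨W⟩`. -/
def IsForest (G : Multigraph V E) (W : Set E) : Prop :=
  ∀ e ∈ W, ¬ (G.inc e).IsDiag ∧
    ∀ u v : V, G.inc e = s(u, v) → ¬ G.Reach (W \ {e}) u v

/-- Edges with all endpoints in `U`: the edge set of the induced subgraph `G[U]`. -/
def edgesWithin (G : Multigraph V E) (U : Set V) : Set E :=
  {e | ∀ v ∈ G.inc e, v ∈ U}

/-- `E_G(U₁, U₂)`: edges with one end in `U₁` and the other end in `U₂`. -/
def edgesBetween (G : Multigraph V E) (U₁ U₂ : Set V) : Set E :=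
  {e | ∃ u v, G.inc e = s(u, v) ∧ u ∈ U₁ ∧ v ∈ U₂}

/-- `E_G(U) = E_G(U, V − U)`: edges with one end in `U` and the other outside. -/
def edgeBoundary (G : Multigraph V E) (U : Set V) : Set E :=
  G.edgesBetween U Uᶜ

/-- `U` is a clique of `G`: the induced subgraph `G[U]` is a complete graph,
i.e. exactly one edge joins each pair of distinct vertices of `U`, and there
are neither loops nor parallel edges inside `U`. -/
def IsClique (G : Multigraph V E) (U : Set V) : Prop :=
  (∀ u ∈ U, ∀ v ∈ U, u ≠ v → ∃! e : E, G.inc e = s(u, v)) ∧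
    ∀ e ∈ G.edgesWithin U, ¬ (G.inc e).IsDiag

/-- The degree of a vertex: the number of edges incident with it. -/
noncomputable def degree (G : Multigraph V E) (v : V) : ℕ :=
  {e : E | v ∈ G.inc e}.ncard

/-- The vertices incident with some edge of `W`: the vertex set of `G[W]`. -/
def supp (G : Multigraph V E) (W : Set E) : Set V :=
  {v | ∃ e ∈ W, v ∈ G.inc e}

/-- Edges `e` and `f` lie in the same component of `G[W]`. -/
def EdgeConn (G : Multigraph V E) (W : Set E) (e f : E) : Prop :=
  ∃ u v : V, u ∈ G.inc e ∧ v ∈ G.inc f ∧ G.Reach W u v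

/-- Every component of `G[W]` is a star whose center lies in `C`. -/
def StarComponents (G : Multigraph V E) (W : Set E) (C : Set V) : Prop :=
  ∀ e ∈ W, ∃ w ∈ C, ∀ f ∈ W, G.EdgeConn W e f →
    (w ∈ G.inc f ∧ ¬ (G.inc f).IsDiag ∧
      ∀ g ∈ W, G.EdgeConn W e g → G.inc g = G.inc f → g = f)

/-- The setoid on `V` identifying the vertices connected by edges of `W`. -/
def contractSetoid (G : Multigraph V E) (W : Set E) : Setoid V where
  r := G.Reach W
  iseqv := ⟨fun _ => Relation.ReflTransGen.refl,
    fun h => (@Relation.ReflTransGen.symmetric _ _ ⟨fun _ _ h' => G.step_symm W h'⟩).symm _ _ h,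
    fun h h' => Relation.ReflTransGen.trans h h'⟩

/-- The contraction `G/W` of the edges in `W`. -/
def contract (G : Multigraph V E) (W : Set E) :
    Multigraph (Quotient (G.contractSetoid W)) {e : E // e ∉ W} :=
  ⟨fun e => (G.inc e.val).map (Quotient.mk (G.contractSetoid W))⟩

/-- Deletion `G − D` of the edges in `D`. -/
def deleteEdges (G : Multigraph V E) (D : Set E) : Multigraph V {e : E // e ∉ D} :=
  ⟨fun e => G.inc e.val⟩

/-- The closed neighbourhood `N_G[S]`. -/
def closedNbhd (G : Multigraph V E) (S : Set V) : Set V :=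
  S ∪ {v | ∃ u ∈ S, ∃ e : E, G.inc e = s(u, v)}

/-- The induced subgraph `G[A]`, described using a choice `ends` of the pair of
endpoints of each edge. -/
def induce (G : Multigraph V E) (A : Set V) (ends : E → V × V)
    (hends : ∀ e, G.inc e = s((ends e).1, (ends e).2)) :
    Multigraph A {e : E // e ∈ G.edgesWithin A} :=
  ⟨fun e => s(⟨(ends e.val).1, e.prop _ (by rw [hends]; exact Sym2.mem_mk_left _ _)⟩,
              ⟨(ends e.val).2, e.prop _ (by rw [hends]; exact Sym2.mem_mk_right _ _)⟩)⟩

end Multigraph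


open Multigraph

/-!
Contracted graphs are handled as equivalence relations `s` on `V`: a tree over `s` is an edge set
that becomes a spanning tree when each class of `s` is contracted. Deleting an edge from a tree
gives a recursion in `s` for the number of trees over `s`. Two solutions of it are the number of
trees inside a clique `C` (Cayley: `|C| ^ (r - 2) * ∏ |C ∩ X|`, over the `r` classes `X` of `s`) and
the number of trees all of whose edges start in one hub class.

The cliques are contracted one after the other. For a single clique `C` with boundary `M`, group the
trees by their set `A` of edges not meeting `C`. The edges of `A` leave the vertices of `C`
separate; let `m` be the number of other classes of `V` under `A`. Extending `A ∪ M` inside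
`C` is counted by Cayley's product, and extending `A` by edges of `M` after contracting `C` by the
hub product. Each edge of `M` has its own end in `C`, so both products are taken over the same `m`
numbers, up to the factor `|C| ^ (|C| - 2 - |M| + m)`. As every extension of `A` in the contracted
graph has exactly `m` edges at the vertex of `C`, the factor `|C| ^ m` is the weight of the tree.
-/

namespace Multigraph

section EdgeClasses

variable {V : Type u} {E : Type v} (G : Multigraph V E)

theorem contractSetoid_le_iff {A : Set E} {s : Setoid V} :
    G.contractSetoid A ≤ s ↔ ∀ e ∈ A, ∀ u v, G.inc e = s(u, v) → s u v := by
  refine ⟨fun h e he u v huv => h (Relation.ReflTransGen.single ⟨e, he, huv⟩), fun h x y hxy => ?_⟩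
  induction (show Relation.ReflTransGen (G.Step A) x y from hxy) with
  | refl => exact s.refl _
  | tail _ hstep ih =>
    obtain ⟨e, he, huv⟩ := hstep
    exact s.trans (ih ‹_›) (h e he _ _ huv)

theorem contractSetoid_rel {A : Set E} {e : E} (he : e ∈ A) {u v : V} (huv : G.inc e = s(u, v)) :
    G.contractSetoid A u v :=
  G.contractSetoid_le_iff.1 le_rfl e he u v huv

theorem contractSetoid_singleton_le_iff {s : Setoid V} {e : E} {u v : V}
    (huv : G.inc e = s(u, v)) : G.contractSetoid {e} ≤ s ↔ s u v := by
  refine ⟨fun h => h (G.contractSetoid_rel (Set.mem_singleton e) huv),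
    fun h => G.contractSetoid_le_iff.2 ?_⟩
  rintro _ rfl x y hxy
  obtain ⟨rfl, rfl⟩ | ⟨rfl, rfl⟩ := Sym2.eq_iff.1 (huv.symm.trans hxy)
  exacts [h, s.symm h]

theorem contractSetoid_mono {A B : Set E} (h : A ⊆ B) :
    G.contractSetoid A ≤ G.contractSetoid B :=
  G.contractSetoid_le_iff.2 fun _ he _ _ huv => G.contractSetoid_rel (h he) huv

theorem contractSetoid_union (A B : Set E) :
    G.contractSetoid (A ∪ B) = G.contractSetoid A ⊔ G.contractSetoid B := by
  refine le_antisymm (G.contractSetoid_le_iff.2 ?_)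
    (sup_le (G.contractSetoid_mono Set.subset_union_left)
      (G.contractSetoid_mono Set.subset_union_right))
  rintro e (he | he) u v huv
  · exact (le_sup_left : _ ≤ G.contractSetoid A ⊔ _) (G.contractSetoid_rel he huv)
  · exact (le_sup_right : _ ≤ _ ⊔ G.contractSetoid B) (G.contractSetoid_rel he huv)

theorem contractSetoid_empty : G.contractSetoid ∅ = ⊥ :=
  eq_bot_iff.2 (G.contractSetoid_le_iff.2 (by simp))

theorem connectedOn_iff_contractSetoid_eq_top {T : Set E} :
    G.ConnectedOn T ↔ G.contractSetoid T = ⊤ :=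
  (Setoid.eq_top_iff (s := G.contractSetoid T)).symm

theorem contractSetoid_contract (W : Set E) (T : Set {e // e ∉ W}) :
    ((G.contract W).contractSetoid T).comap (Quotient.mk _) =
      G.contractSetoid W ⊔ G.contractSetoid (Subtype.val '' T) := by
  set r := G.contractSetoid W ⊔ G.contractSetoid (Subtype.val '' T)
  apply le_antisymm
  · let toR : Quotient (G.contractSetoid W) → Quotient r :=
      Quotient.map id fun _ _ h => (le_sup_left : G.contractSetoid W ≤ r) h
    have hle : (G.contract W).contractSetoid T ≤ Setoid.ker toR := by
      refine (G.contract W).contractSetoid_le_iff.2 fun e he x y hxy => ?_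
      obtain ⟨⟨u, v⟩, huv⟩ := Sym2.mk_surjective (G.inc e)
      have huv' : r u v :=
        (le_sup_right : _ ≤ r) (G.contractSetoid_rel (Set.mem_image_of_mem _ he) huv.symm)
      have hmap : s(Quotient.mk _ u, Quotient.mk _ v) = s(x, y) :=
        (congrArg (Sym2.map _) huv).trans hxy
      obtain ⟨rfl, rfl⟩ | ⟨rfl, rfl⟩ := Sym2.eq_iff.1 hmap
      exacts [Quotient.sound huv', Quotient.sound (r.symm huv')]
    exact fun _ _ h => Quotient.exact (hle h)
  · refine sup_le (fun x y h => ?_) (G.contractSetoid_le_iff.2 ?_)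
    · rw [Setoid.comap_rel, Quotient.sound h]
    · rintro _ ⟨e, he, rfl⟩ u v huv
      exact (G.contract W).contractSetoid_rel he (congrArg (Sym2.map _) huv)

variable {G} in
theorem mem_edgesWithin_iff {C : Set V} {e : E} {u v : V} (huv : G.inc e = s(u, v)) :
    e ∈ G.edgesWithin C ↔ u ∈ C ∧ v ∈ C := by
  simp [edgesWithin, huv]

end EdgeClasses

section ClassCount

variable {V : Type u}

theorem sup_eq_comap_of_retraction {s t : Setoid V} {ρ : V → V} (hs : s ≤ s.comap ρ)
    (ht : t ≤ s.comap ρ) (hρ : ∀ x, (s ⊔ t) x (ρ x)) : s ⊔ t = s.comap ρ :=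
  le_antisymm (sup_le hs ht) fun x y hxy =>
    (s ⊔ t).trans (hρ x) ((s ⊔ t).trans ((le_sup_left : s ≤ _) hxy) ((s ⊔ t).symm (hρ y)))

/-- The number of classes of `s`, i.e. the number of vertices after the classes are contracted. -/
noncomputable def numClasses (s : Setoid V) : ℕ := Nat.card (Quotient s)

theorem numClasses_comap (s : Setoid V) (ρ : V → V) :
    numClasses (s.comap ρ) = (Set.range (Quotient.mk s ∘ ρ)).ncard := by
  rw [← Nat.card_coe_set_eq]
  exact Nat.card_congr (Setoid.comapQuotientEquiv ρ s)

theorem numClasses_bot : numClasses (⊥ : Setoid V) = Nat.card V :=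
  Nat.card_congr Setoid.quotientBotEquiv

theorem numClasses_pos [Finite V] [Nonempty V] (s : Setoid V) : 0 < numClasses s :=
  haveI : Nonempty (Quotient s) := ‹Nonempty V›.map (Quotient.mk s)
  Nat.card_pos

theorem numClasses_eq_one_iff [Nonempty V] {s : Setoid V} : numClasses s = 1 ↔ s = ⊤ := by
  rw [numClasses, Nat.card_eq_one_iff_unique, ← Quotient.subsingleton_iff]
  exact and_iff_left (‹Nonempty V›.map (Quotient.mk s))

end ClassCount

section ClassProduct

variable {V : Type u} [Fintype V] {R : Type*} [CommMonoid R]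

open scoped Classical in
/-- The product of the weights `h X` over the classes `X` of `s`. -/
noncomputable def classProd (h : Set V → R) (s : Setoid V) : R :=
  ∏ c : Quotient s, h (Quotient.mk s ⁻¹' {c})

theorem classProd_top [Nonempty V] (h : Set V → R) : classProd h ⊤ = h Set.univ := by
  classical
  have := Quotient.subsingleton_iff.2 (rfl : (⊤ : Setoid V) = ⊤)
  rw [classProd, Fintype.prod_subsingleton _ (Quotient.mk _ (Classical.arbitrary V))]
  exact congrArg h (Set.eq_univ_of_forall fun x => Subsingleton.elim _ _)

open scoped Classical in
theorem classProd_comap (h : Set V → R) (s : Setoid V) (ρ : V → V) :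
    classProd h (s.comap ρ) =
      ∏ c with c ∈ Set.range (Quotient.mk s ∘ ρ), h (Quotient.mk s ∘ ρ ⁻¹' {c}) := by
  rw [Finset.prod_subtype (p := (· ∈ Set.range (Quotient.mk s ∘ ρ))) _ (by simp)]
  refine Fintype.prod_equiv (Setoid.comapQuotientEquiv ρ s) _ _ ?_
  rintro ⟨x⟩
  refine congrArg h (Set.ext fun y => ?_)
  exact Quotient.eq.trans (Quotient.eq (r := s)).symm

end ClassProduct

section MergeEdge

variable {V : Type u} {E : Type v} (G : Multigraph V E) {s : Setoid V} {e : E} {u v : V}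

open scoped Classical in
/-- The retraction sending the whole `s`-class of `v` to `u`; pulling `s` back along it merges the
classes of `u` and `v`. -/
noncomputable def mergeMap (s : Setoid V) (u v x : V) : V := if s x v then u else x

theorem mergeMap_of_rel {x : V} (h : s x v) : mergeMap s u v x = u := if_pos h

theorem mergeMap_of_not_rel {x : V} (h : ¬ s x v) : mergeMap s u v x = x := if_neg h

theorem sup_contractSetoid_singleton (huv : G.inc e = s(u, v)) :
    s ⊔ G.contractSetoid {e} = s.comap (mergeMap s u v) := by
  have hvu : (s ⊔ G.contractSetoid {e}) v u := (le_sup_right : G.contractSetoid {e} ≤ _)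
    (G.contractSetoid_rel (Set.mem_singleton e) (huv.trans Sym2.eq_swap))
  apply sup_eq_comap_of_retraction
  · intro x y hxy
    rw [Setoid.comap_rel]
    by_cases hx : s x v
    · rw [mergeMap_of_rel hx, mergeMap_of_rel (s.trans (s.symm hxy) hx)]
    · rwa [mergeMap_of_not_rel hx, mergeMap_of_not_rel fun hy => hx (s.trans hxy hy)]
  · rw [G.contractSetoid_singleton_le_iff huv, Setoid.comap_rel, mergeMap_of_rel (s.refl v),
      mergeMap, ite_self]
  · intro x
    by_cases hx : s x v
    · rw [mergeMap_of_rel hx]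
      exact (s ⊔ G.contractSetoid {e}).trans ((le_sup_left : s ≤ _) hx) hvu
    · rw [mergeMap_of_not_rel hx]

theorem range_mergeMap (hn : ¬ s u v) :
    Set.range (Quotient.mk s ∘ mergeMap s u v) = {Quotient.mk s v}ᶜ := by
  ext c
  obtain ⟨y, rfl⟩ := Quotient.exists_rep c
  refine ⟨?_, fun hy =>
    ⟨y, congrArg (Quotient.mk s) (mergeMap_of_not_rel fun h => hy (Quotient.sound h))⟩⟩
  rintro ⟨x, hx⟩ hy
  have hxv : s (mergeMap s u v x) v := Quotient.exact (hx.trans hy)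
  by_cases h : s x v
  · rw [mergeMap_of_rel h] at hxv
    exact hn hxv
  · rw [mergeMap_of_not_rel h] at hxv
    exact h hxv

theorem preimage_mergeMap_of_ne {c : Quotient s} (hcu : c ≠ Quotient.mk s u)
    (hcv : c ≠ Quotient.mk s v) :
    Quotient.mk s ∘ mergeMap s u v ⁻¹' {c} = Quotient.mk s ⁻¹' {c} := by
  ext x
  rw [Set.mem_preimage, Function.comp_apply, Set.mem_preimage]
  by_cases h : s x v
  · rw [mergeMap_of_rel h, Quotient.sound h]
    exact iff_of_false hcu.symm hcv.symm
  · rw [mergeMap_of_not_rel h]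

theorem preimage_mergeMap_self :
    Quotient.mk s ∘ mergeMap s u v ⁻¹' {Quotient.mk s u} =
      Quotient.mk s ⁻¹' {Quotient.mk s u} ∪ Quotient.mk s ⁻¹' {Quotient.mk s v} := by
  ext x
  rw [Set.mem_preimage, Function.comp_apply, Set.mem_union, Set.mem_preimage, Set.mem_preimage]
  by_cases h : s x v
  · rw [mergeMap_of_rel h]
    exact iff_of_true rfl (Or.inr (Quotient.sound h))
  · rw [mergeMap_of_not_rel h]
    exact (or_iff_left fun hx => h (Quotient.exact hx)).symm

theorem numClasses_sup_singleton [Finite V] (huv : G.inc e = s(u, v)) (hn : ¬ s u v) :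
    1 + numClasses (s ⊔ G.contractSetoid {e}) = numClasses s := by
  rw [G.sup_contractSetoid_singleton huv, numClasses_comap, range_mergeMap hn,
    ← Set.ncard_singleton (Quotient.mk s v), Set.ncard_add_ncard_compl, numClasses]

open scoped Classical in
theorem classProd_sup_singleton [Fintype V] {R : Type*} [CommMonoid R] (h : Set V → R)
    (huv : G.inc e = s(u, v)) (hn : ¬ s u v) :
    classProd h (s ⊔ G.contractSetoid {e}) =
      h (Quotient.mk s ⁻¹' {Quotient.mk s u} ∪ Quotient.mk s ⁻¹' {Quotient.mk s v}) *
        ∏ c ∈ (Finset.univ.erase (Quotient.mk s v)).erase (Quotient.mk s u),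
          h (Quotient.mk s ⁻¹' {c}) := by
  have hne : Quotient.mk s u ≠ Quotient.mk s v := fun h => hn (Quotient.exact h)
  have hrange : (Finset.univ.filter fun c => c ∈ Set.range (Quotient.mk s ∘ mergeMap s u v)) =
      Finset.univ.erase (Quotient.mk s v) := by
    ext c
    simp [range_mergeMap hn]
  rw [G.sup_contractSetoid_singleton huv, classProd_comap, hrange,
    ← Finset.mul_prod_erase _ _ (Finset.mem_erase.2 ⟨hne, Finset.mem_univ _⟩),
    preimage_mergeMap_self]
  refine congrArg _ (Finset.prod_congr rfl fun c hc => ?_)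
  simp only [Finset.mem_erase] at hc
  rw [preimage_mergeMap_of_ne hc.1 hc.2.1]

end MergeEdge

section TreesOver

variable {V : Type u} {E : Type v} (G : Multigraph V E)

/-- `A` is a forest of the graph obtained from `G` by contracting every class of `s`: each edge of
`A` lowers the number of components. -/
def IsForestOver (s : Setoid V) (A : Set E) : Prop :=
  A.ncard + numClasses (s ⊔ G.contractSetoid A) = numClasses s

/-- `T` is a spanning tree of the graph obtained from `G` by contracting every class of `s`. -/
def IsTreeOver (s : Setoid V) (T : Set E) : Prop :=
  s ⊔ G.contractSetoid T = ⊤ ∧ T.ncard + 1 = numClasses s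

variable {G} {s : Setoid V} {A B T W : Set E}

theorem isSpanningTree_iff_isTreeOver_bot : G.IsSpanningTree T ↔ G.IsTreeOver ⊥ T := by
  rw [IsSpanningTree, IsTreeOver, bot_sup_eq, numClasses_bot, connectedOn_iff_contractSetoid_eq_top]

theorem isTreeOver_iff [Nonempty V] :
    G.IsTreeOver s T ↔ G.IsForestOver s T ∧ s ⊔ G.contractSetoid T = ⊤ := by
  rw [IsTreeOver, IsForestOver, and_comm]
  refine and_congr_left fun h => ?_
  rw [numClasses_eq_one_iff.2 h]

variable [Finite V]

theorem isForestOver_singleton {e : E} :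
    G.IsForestOver s {e} ↔ ¬ G.contractSetoid {e} ≤ s := by
  obtain ⟨⟨u, v⟩, huv⟩ := Sym2.mk_surjective (G.inc e)
  rw [IsForestOver, Set.ncard_singleton]
  refine ⟨fun h hle => ?_, fun h => G.numClasses_sup_singleton huv.symm
    (mt (G.contractSetoid_singleton_le_iff huv.symm).2 h)⟩
  rw [sup_eq_left.2 hle] at h
  omega

variable [Finite E]

theorem numClasses_le_ncard_add (s : Setoid V) (A : Set E) :
    numClasses s ≤ A.ncard + numClasses (s ⊔ G.contractSetoid A) := by
  induction A, A.toFinite using Set.Finite.induction_on generalizing s with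
  | empty => simp [contractSetoid_empty]
  | @insert e A he _ ih =>
    rw [Set.ncard_insert_of_notMem he, Set.insert_eq, contractSetoid_union, ← sup_assoc]
    have hA := ih (s ⊔ G.contractSetoid {e})
    by_cases hle : G.contractSetoid {e} ≤ s
    · rw [sup_eq_left.2 hle] at hA ⊢
      omega
    · have he := isForestOver_singleton.2 hle
      rw [IsForestOver, Set.ncard_singleton] at he
      omega

theorem isForestOver_union (h : Disjoint A B) :
    G.IsForestOver s (A ∪ B) ↔ G.IsForestOver s A ∧ G.IsForestOver (s ⊔ G.contractSetoid A) B := by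
  have hA := G.numClasses_le_ncard_add s A
  have hB := G.numClasses_le_ncard_add (s ⊔ G.contractSetoid A) B
  rw [IsForestOver, IsForestOver, IsForestOver, Set.ncard_union_eq h, contractSetoid_union,
    ← sup_assoc]
  omega

variable [Nonempty V]

theorem isTreeOver_union (h : Disjoint A B) :
    G.IsTreeOver s (A ∪ B) ↔ G.IsForestOver s A ∧ G.IsTreeOver (s ⊔ G.contractSetoid A) B := by
  rw [isTreeOver_iff, isTreeOver_iff, isForestOver_union h, contractSetoid_union, ← sup_assoc,
    and_assoc]

theorem IsTreeOver.not_le_of_mem {e : E} (hT : G.IsTreeOver s T) (he : e ∈ T) :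
    ¬ G.contractSetoid {e} ≤ s := by
  rw [← Set.insert_sdiff_self_of_mem he, Set.insert_eq, isTreeOver_union (by simp)] at hT
  exact isForestOver_singleton.1 hT.1

theorem IsTreeOver.disjoint_of_le (hT : G.IsTreeOver s T) (hW : G.contractSetoid W ≤ s) :
    Disjoint T W :=
  Set.disjoint_left.2 fun _ heT heW => hT.not_le_of_mem heT
    ((G.contractSetoid_mono (Set.singleton_subset_iff.2 heW)).trans hW)

end TreesOver

section TreeCount

variable {V : Type u} {E : Type v} [Fintype E] (G : Multigraph V E)

open scoped Classical in
/-- The number of spanning trees, using only edges of `S`, of the graph obtained from `G` by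
contracting every class of `s`. -/
noncomputable def treeCount (S : Set E) (s : Setoid V) : ℕ :=
  Finset.card {T : Set E | T ⊆ S ∧ G.IsTreeOver s T}

theorem treeCount_top [Nonempty V] (S : Set E) : G.treeCount S ⊤ = 1 := by
  classical
  rw [treeCount, Finset.card_eq_one]
  refine ⟨∅, Finset.ext fun T => ?_⟩
  have hone : numClasses (⊤ : Setoid V) = 1 := numClasses_eq_one_iff.2 rfl
  simp only [Finset.mem_filter_univ, Finset.mem_singleton, IsTreeOver, top_sup_eq, true_and, hone,
    Nat.add_eq_right, Set.ncard_eq_zero T.toFinite]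
  exact ⟨And.right, fun h => ⟨h ▸ Set.empty_subset S, h⟩⟩

variable [Finite V] [Nonempty V]

open scoped Classical in
theorem card_trees_mem {S : Set E} {s : Setoid V} {e : E} (he : e ∈ S)
    (hes : ¬ G.contractSetoid {e} ≤ s) :
    Finset.card {T : Set E | (T ⊆ S ∧ G.IsTreeOver s T) ∧ e ∈ T} =
      G.treeCount S (s ⊔ G.contractSetoid {e}) := by
  have insert_iff {T : Set E} (heT : e ∉ T) :
      G.IsTreeOver s (insert e T) ↔ G.IsTreeOver (s ⊔ G.contractSetoid {e}) T := by
    rw [Set.insert_eq, isTreeOver_union (Set.disjoint_singleton_left.2 heT)]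
    exact and_iff_right (isForestOver_singleton.2 hes)
  have notMem {T : Set E} (hT : G.IsTreeOver (s ⊔ G.contractSetoid {e}) T) : e ∉ T :=
    Set.disjoint_singleton_right.1 (hT.disjoint_of_le le_sup_right)
  refine Finset.card_bij' (fun T _ => T \ {e}) (fun T _ => insert e T) ?_ ?_ ?_ ?_ <;>
    simp only [Finset.mem_filter_univ]
  · rintro T ⟨⟨hTS, hT⟩, heT⟩
    refine ⟨Set.sdiff_subset.trans hTS, (insert_iff (by simp)).1 ?_⟩
    rwa [Set.insert_sdiff_self_of_mem heT]
  · rintro T ⟨hTS, hT⟩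
    exact ⟨⟨Set.insert_subset he hTS, (insert_iff (notMem hT)).2 hT⟩, Set.mem_insert e T⟩
  · rintro T ⟨-, heT⟩
    exact Set.insert_sdiff_self_of_mem heT
  · rintro T ⟨-, hT⟩
    exact Set.insert_sdiff_self_of_notMem (notMem hT)

open scoped Classical in
/-- Count the pairs (tree, edge of the tree) in two ways. -/
theorem numClasses_sub_one_mul_treeCount (S : Set E) (s : Setoid V) :
    (numClasses s - 1) * G.treeCount S s =
      ∑ e with e ∈ S ∧ ¬ G.contractSetoid {e} ≤ s, G.treeCount S (s ⊔ G.contractSetoid {e}) := by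
  have hedges (T : Set E) (hT : T ⊆ S ∧ G.IsTreeOver s T) :
      Finset.card {e | (e ∈ S ∧ ¬ G.contractSetoid {e} ≤ s) ∧ e ∈ T} = numClasses s - 1 := by
    rw [← hT.2.2, Nat.add_sub_cancel, Set.ncard_eq_toFinset_card']
    refine congrArg _ (Finset.ext fun e => ?_)
    simp only [Finset.mem_filter_univ, Set.mem_toFinset]
    exact and_iff_right_of_imp fun he => ⟨hT.1 he, hT.2.not_le_of_mem he⟩
  have hcount := Finset.sum_card_bipartiteAbove_eq_sum_card_bipartiteBelow
    (s := {e | e ∈ S ∧ ¬ G.contractSetoid {e} ≤ s}) (t := {T | T ⊆ S ∧ G.IsTreeOver s T})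
    (fun (e : E) (T : Set E) => e ∈ T)
  simp only [Finset.bipartiteAbove, Finset.bipartiteBelow, Finset.filter_filter] at hcount
  rw [Finset.sum_congr rfl fun T hT => hedges T ((Finset.mem_filter_univ T).1 hT),
    Finset.sum_const, smul_eq_mul, mul_comm] at hcount
  rw [treeCount, ← hcount]
  refine Finset.sum_congr rfl fun e he => ?_
  obtain ⟨heS, hes⟩ := (Finset.mem_filter_univ e).1 he
  exact G.card_trees_mem heS hes

open scoped Classical in
theorem treeCount_eq_of_recursion (S : Set E) (s₀ : Setoid V) (F : Setoid V → ℚ) (htop : F ⊤ = 1)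
    (hrec : ∀ s, s₀ ≤ s → (numClasses s - 1 : ℚ) * F s =
      ∑ e with e ∈ S ∧ ¬ G.contractSetoid {e} ≤ s, F (s ⊔ G.contractSetoid {e}))
    {s : Setoid V} (hs : s₀ ≤ s) : (G.treeCount S s : ℚ) = F s := by
  induction hn : numClasses s using Nat.strong_induction_on generalizing s with
  | _ n ih =>
  by_cases ht : s = ⊤
  · rw [ht, htop, G.treeCount_top, Nat.cast_one]
  · have hpos := numClasses_pos s
    have hne : (numClasses s - 1 : ℚ) ≠ 0 := by
      rw [sub_ne_zero]
      exact_mod_cast mt numClasses_eq_one_iff.1 ht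
    apply mul_left_cancel₀ hne
    have hcount := congrArg (Nat.cast : ℕ → ℚ) (G.numClasses_sub_one_mul_treeCount S s)
    rw [Nat.cast_mul, Nat.cast_sub hpos, Nat.cast_one, Nat.cast_sum] at hcount
    rw [hcount, hrec s hs]
    refine Finset.sum_congr rfl fun e he => ?_
    have hdrop := isForestOver_singleton.2 ((Finset.mem_filter_univ e).1 he).2
    rw [IsForestOver, Set.ncard_singleton] at hdrop
    exact ih _ (by omega) (hs.trans le_sup_left) rfl

end TreeCount

section CliqueTrees

variable {V : Type u} {E : Type v} {G : Multigraph V E}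

open scoped Classical in
theorem sum_comp_eq_sum_ncard_mul {ι κ : Type*} [Fintype ι] [Fintype κ] (I : Set ι) (π : ι → κ)
    (F : κ → ℚ) : ∑ i with i ∈ I, F (π i) = ∑ c, ((I ∩ π ⁻¹' {c}).ncard : ℚ) * F c := by
  rw [← Finset.sum_fiberwise' _ π]
  refine Finset.sum_congr rfl fun c _ => ?_
  rw [Finset.sum_const, nsmul_eq_mul, Set.ncard_eq_toFinset_card', Finset.filter_filter]
  congr 3
  ext i
  simp

theorem sum_mul_sub_mul_prod_erase {κ : Type*} [Fintype κ] [DecidableEq κ] (h : κ → ℚ) (n : ℚ)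
    (hn : ∑ c, h c = n) :
    ∑ c, h c * ((n - h c) * ∏ d ∈ Finset.univ.erase c, h d) =
      (Fintype.card κ - 1) * (n * ∏ c, h c) := by
  have hterm (c : κ) : h c * ((n - h c) * ∏ d ∈ Finset.univ.erase c, h d) =
      (n - h c) * ∏ d, h d := by
    rw [← Finset.mul_prod_erase Finset.univ h (Finset.mem_univ c)]
    ring
  rw [Finset.sum_congr rfl fun c _ => hterm c, ← Finset.sum_mul, Finset.sum_sub_distrib, hn,
    Finset.sum_const, Finset.card_univ, nsmul_eq_mul]
  ring

open scoped Classical in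
theorem sum_pairs_eq_of_ne [Fintype V] {u v : V} (h : u ≠ v) (g : V → V → ℚ) :
    ∑ p : V × V with s(u, v) = s(p.1, p.2), g p.1 p.2 = g u v + g v u := by
  have hpairs : (Finset.univ.filter fun p : V × V => s(u, v) = s(p.1, p.2)) =
      {(u, v), (v, u)} := by
    ext ⟨x, y⟩
    simp only [Finset.mem_filter_univ, Sym2.eq_iff, Finset.mem_insert, Finset.mem_singleton,
      Prod.mk.injEq]
    tauto
  rw [hpairs, Finset.sum_pair (by simp [h])]

variable [Fintype V]

open scoped Classical in
theorem IsClique.sum_crossing_edges [Fintype E] {C : Set V} (hC : G.IsClique C) (s : Setoid V)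
    (φ : E → ℚ) (g : V → V → ℚ)
    (hg : ∀ e u v, G.inc e = s(u, v) → ¬ s u v → φ e = g u v + g v u) :
    ∑ e with e ∈ G.edgesWithin C ∧ ¬ G.contractSetoid {e} ≤ s, φ e =
      ∑ p : V × V with (p.1 ∈ C ∧ p.2 ∈ C) ∧ ¬ s p.1 p.2, g p.1 p.2 := by
  have hends (e : E) (he : ¬ G.contractSetoid {e} ≤ s) :
      φ e = ∑ p : V × V with G.inc e = s(p.1, p.2), g p.1 p.2 := by
    obtain ⟨⟨u, v⟩, huv⟩ := Sym2.mk_surjective (G.inc e)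
    have hn : ¬ s u v := mt (G.contractSetoid_singleton_le_iff huv.symm).2 he
    have hne : u ≠ v := by rintro rfl; exact hn (s.refl u)
    rw [← huv, hg e u v huv.symm hn]
    exact (sum_pairs_eq_of_ne hne g).symm
  have hedge (p : V × V) (hp : (p.1 ∈ C ∧ p.2 ∈ C) ∧ ¬ s p.1 p.2) :
      Finset.card {e | G.inc e = s(p.1, p.2)} = 1 := by
    have hne : p.1 ≠ p.2 := fun h => hp.2 (h ▸ s.refl p.1)
    obtain ⟨e, he, huniq⟩ := hC.1 p.1 hp.1.1 p.2 hp.1.2 hne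
    refine Finset.card_eq_one.2 ⟨e, Finset.ext fun f => ?_⟩
    rw [Finset.mem_filter_univ, Finset.mem_singleton]
    exact ⟨huniq f, fun h => h ▸ he⟩
  calc
    _ = ∑ e with e ∈ G.edgesWithin C ∧ ¬ G.contractSetoid {e} ≤ s,
          ∑ p : V × V with G.inc e = s(p.1, p.2), g p.1 p.2 :=
      Finset.sum_congr rfl fun e he => hends e ((Finset.mem_filter_univ e).1 he).2
    _ = ∑ p : V × V with (p.1 ∈ C ∧ p.2 ∈ C) ∧ ¬ s p.1 p.2,
          ∑ e with G.inc e = s(p.1, p.2), g p.1 p.2 := by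
      refine Finset.sum_comm' fun e p => ?_
      simp only [Finset.mem_filter_univ]
      rw [and_comm]
      refine and_congr_right fun hep => ?_
      rw [mem_edgesWithin_iff hep, G.contractSetoid_singleton_le_iff hep]
    _ = _ := by
      refine Finset.sum_congr rfl fun p hp => ?_
      rw [Finset.sum_const, hedge p ((Finset.mem_filter_univ p).1 hp), one_smul]

open scoped Classical in
theorem sum_unrelated_pairs (C : Set V) (s : Setoid V) (F : Quotient s → ℚ) :
    ∑ p : V × V with (p.1 ∈ C ∧ p.2 ∈ C) ∧ ¬ s p.1 p.2, F (Quotient.mk s p.2) =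
      ∑ c, ((C ∩ Quotient.mk s ⁻¹' {c}).ncard : ℚ) *
        ((C.ncard - (C ∩ Quotient.mk s ⁻¹' {c}).ncard) * F c) := by
  have hcard (v : V) : (Finset.card {u | u ∈ C ∧ ¬ s u v} : ℚ) =
      C.ncard - (C ∩ Quotient.mk s ⁻¹' {Quotient.mk s v}).ncard := by
    have hset : {u | u ∈ C ∧ ¬ s u v} = C \ Quotient.mk s ⁻¹' {Quotient.mk s v} :=
      Set.ext fun u => and_congr_right fun _ => not_congr Quotient.eq.symm
    rw [← Set.ncard_inter_add_ncard_sdiff_eq_ncard C (Quotient.mk s ⁻¹' {Quotient.mk s v}), ← hset,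
      Set.ncard_eq_toFinset_card' {u | u ∈ C ∧ ¬ s u v}, Set.toFinset_ofPred]
    push_cast
    ring
  rw [Finset.sum_finset_product_right _ (Finset.univ.filter (· ∈ C))
    (fun v => Finset.univ.filter fun u => u ∈ C ∧ ¬ s u v)
    (by simp only [Finset.mem_filter_univ]; tauto)]
  simp only [Finset.sum_const, nsmul_eq_mul, hcard]
  exact sum_comp_eq_sum_ncard_mul C (Quotient.mk s)
    fun c => (C.ncard - (C ∩ Quotient.mk s ⁻¹' {c}).ncard) * F c

open scoped Classical in
theorem classProd_ncard_inter_sup_singleton (C : Set V) {s : Setoid V} {e : E} {u v : V}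
    (huv : G.inc e = s(u, v)) (hn : ¬ s u v) :
    classProd (fun X => ((C ∩ X).ncard : ℚ)) (s ⊔ G.contractSetoid {e}) =
      ∏ c ∈ Finset.univ.erase (Quotient.mk s v), ((C ∩ Quotient.mk s ⁻¹' {c}).ncard : ℚ) +
        ∏ c ∈ Finset.univ.erase (Quotient.mk s u), ((C ∩ Quotient.mk s ⁻¹' {c}).ncard : ℚ) := by
  have hne : Quotient.mk s u ≠ Quotient.mk s v := fun h => hn (Quotient.exact h)
  have hdisj :
      Disjoint (Quotient.mk s ⁻¹' {Quotient.mk s u}) (Quotient.mk s ⁻¹' {Quotient.mk s v}) :=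
    Disjoint.preimage _ (Set.disjoint_singleton.2 hne)
  rw [G.classProd_sup_singleton _ huv hn, Set.inter_union_distrib_left,
    Set.ncard_union_eq (hdisj.mono Set.inter_subset_right Set.inter_subset_right), Nat.cast_add,
    add_mul]
  congr 1
  · exact Finset.mul_prod_erase _ (fun c => ((C ∩ Quotient.mk s ⁻¹' {c}).ncard : ℚ))
      (Finset.mem_erase.2 ⟨hne, Finset.mem_univ _⟩)
  · rw [Finset.erase_right_comm]
    exact Finset.mul_prod_erase _ (fun c => ((C ∩ Quotient.mk s ⁻¹' {c}).ncard : ℚ))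
      (Finset.mem_erase.2 ⟨hne.symm, Finset.mem_univ _⟩)

/-- For `s = ⊥` and `C` the whole vertex set this is Cayley's formula. -/
theorem IsClique.treeCount_edgesWithin [Fintype E] [Nonempty V] {C : Set V} (hC : G.IsClique C)
    (hne : C.Nonempty) (s : Setoid V) :
    (G.treeCount (G.edgesWithin C) s : ℚ) =
      (C.ncard : ℚ) ^ (numClasses s - 2 : ℤ) * classProd (fun X => ((C ∩ X).ncard : ℚ)) s := by
  classical
  have hn : (C.ncard : ℚ) ≠ 0 := Nat.cast_ne_zero.2 (Set.ncard_ne_zero_of_mem hne.some_mem)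
  refine G.treeCount_eq_of_recursion _ ⊥ (fun s => (C.ncard : ℚ) ^ (numClasses s - 2 : ℤ) *
    classProd (fun X => ((C ∩ X).ncard : ℚ)) s) ?_ (fun s _ => ?_) bot_le
  · rw [classProd_top, numClasses_eq_one_iff.2 rfl, Set.inter_univ]
    exact zpow_neg_one (C.ncard : ℚ) ▸ inv_mul_cancel₀ hn
  · set h : Quotient s → ℚ := fun c => ((C ∩ Quotient.mk s ⁻¹' {c}).ncard : ℚ) with hh
    set q : ℚ := (C.ncard : ℚ) ^ (numClasses s - 3 : ℤ)
    have hsum : ∑ c, h c = C.ncard := by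
      simpa [hh, Set.ncard_eq_toFinset_card'] using
        (sum_comp_eq_sum_ncard_mul C (Quotient.mk s) fun _ => 1).symm
    have hpow : (C.ncard : ℚ) ^ (numClasses s - 2 : ℤ) = q * C.ncard := by
      rw [← zpow_add_one₀ hn]
      congr 1
      ring
    rw [hC.sum_crossing_edges s _ fun _ v => q * ∏ c ∈ Finset.univ.erase (Quotient.mk s v), h c,
      ← Finset.mul_sum, (sum_unrelated_pairs C s fun c => ∏ d ∈ Finset.univ.erase c, h d).trans
        (sum_mul_sub_mul_prod_erase h _ hsum),
      hpow, classProd, numClasses, Nat.card_eq_fintype_card]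
    · ring
    · intro e u v huv hn
      have hexp : (numClasses (s ⊔ G.contractSetoid {e}) - 2 : ℤ) = numClasses s - 3 := by
        rw [← G.numClasses_sup_singleton huv hn]
        push_cast
        ring
      rw [hexp, classProd_ncard_inter_sup_singleton C huv hn, mul_add]

end CliqueTrees

section StarTrees

variable {V : Type u} {E : Type v} {G : Multigraph V E} {c₀ : V} {M : Set E} {a w : E → V}
  {s : Setoid V}

open scoped Classical in
/-- The number of ways to attach the class `X` to the class of the hub `c₀` by one of the edges
`e ∈ M`, each joining the hub to `w e`. -/
noncomputable def starWeight (c₀ : V) (M : Set E) (w : E → V) (X : Set V) : ℚ :=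
  if c₀ ∈ X then 1 else ((M ∩ w ⁻¹' X).ncard : ℚ)

theorem starWeight_of_mem {X : Set V} (h : c₀ ∈ X) : starWeight c₀ M w X = 1 := if_pos h

theorem starWeight_of_notMem {X : Set V} (h : c₀ ∉ X) :
    starWeight c₀ M w X = (M ∩ w ⁻¹' X).ncard := if_neg h

variable [Fintype V]

open scoped Classical in
theorem classProd_starWeight_sup_singleton {e : E} {u v : V} (huv : G.inc e = s(u, v))
    (hu : Quotient.mk s u = Quotient.mk s c₀) (hv : Quotient.mk s v ≠ Quotient.mk s c₀) :
    classProd (starWeight c₀ M w) (s ⊔ G.contractSetoid {e}) =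
      ∏ c ∈ Finset.univ.erase (Quotient.mk s v), starWeight c₀ M w (Quotient.mk s ⁻¹' {c}) := by
  have hn : ¬ s u v := fun h => hv ((Quotient.sound h).symm.trans hu)
  have hmem : c₀ ∈ Quotient.mk s ⁻¹' {Quotient.mk s c₀} := rfl
  rw [G.classProd_sup_singleton _ huv hn, hu, starWeight_of_mem (Set.mem_union_left _ hmem),
    ← Finset.mul_prod_erase (Finset.univ.erase (Quotient.mk s v)) _
      (Finset.mem_erase.2 ⟨hv.symm, Finset.mem_univ (Quotient.mk s c₀)⟩), starWeight_of_mem hmem]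

open scoped Classical in
theorem ncard_mul_prod_erase_starWeight {c : Quotient s} (hc : c ≠ Quotient.mk s c₀) :
    ((M ∩ Quotient.mk s ∘ w ⁻¹' {c}).ncard : ℚ) *
        ∏ d ∈ Finset.univ.erase c, starWeight c₀ M w (Quotient.mk s ⁻¹' {d}) =
      classProd (starWeight c₀ M w) s := by
  have hc₀ : c₀ ∉ Quotient.mk s ⁻¹' {c} := fun hmem => hc hmem.symm
  rw [classProd, ← Finset.mul_prod_erase Finset.univ _ (Finset.mem_univ c),
    starWeight_of_notMem hc₀, Set.preimage_comp]

theorem treeCount_star [Fintype E] [Nonempty V] (hinc : ∀ e ∈ M, G.inc e = s(a e, w e))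
    (ha : ∀ e ∈ M, s (a e) c₀) :
    (G.treeCount M s : ℚ) = classProd (starWeight c₀ M w) s := by
  classical
  refine G.treeCount_eq_of_recursion M s (classProd (starWeight c₀ M w)) ?_ (fun t hst => ?_) le_rfl
  · rw [classProd_top, starWeight_of_mem (Set.mem_univ c₀)]
  have hhub (e : E) (he : e ∈ M) : Quotient.mk t (a e) = Quotient.mk t c₀ :=
    Quotient.sound (hst (ha e he))
  have hcross (e : E) (he : e ∈ M) :
      ¬ G.contractSetoid {e} ≤ t ↔ Quotient.mk t (w e) ≠ Quotient.mk t c₀ := by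
    rw [G.contractSetoid_singleton_le_iff (hinc e he), ← hhub e he, ne_comm]
    exact not_congr Quotient.eq.symm
  set h : Quotient t → ℚ := fun c => starWeight c₀ M w (Quotient.mk t ⁻¹' {c})
  symm
  calc
    _ = ∑ e with e ∈ M, if Quotient.mk t (w e) ≠ Quotient.mk t c₀ then
          ∏ c ∈ Finset.univ.erase (Quotient.mk t (w e)), h c else 0 := by
      rw [← Finset.sum_filter, Finset.filter_filter]
      refine Finset.sum_congr ?_ fun e he => ?_
      · exact Finset.filter_congr fun e _ => and_congr_right (hcross e)
      · obtain ⟨heM, hwe⟩ := (Finset.mem_filter_univ e).1 he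
        exact classProd_starWeight_sup_singleton (hinc e heM) (hhub e heM) hwe
    _ = ∑ c, if c ≠ Quotient.mk t c₀ then classProd (starWeight c₀ M w) t else 0 := by
      refine (sum_comp_eq_sum_ncard_mul M (Quotient.mk t ∘ w) fun c =>
        if c ≠ Quotient.mk t c₀ then ∏ d ∈ Finset.univ.erase c, h d else 0).trans
        (Finset.sum_congr rfl fun c _ => ?_)
      split_ifs with hc
      exacts [ncard_mul_prod_erase_starWeight hc, mul_zero _]
    _ = _ := by
      rw [← Finset.sum_filter, Finset.sum_const, Finset.filter_ne', nsmul_eq_mul,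
        Finset.cast_card_erase_of_mem (Finset.mem_univ _), Finset.card_univ, numClasses,
        Nat.card_eq_fintype_card]

end StarTrees

section DiscreteSet

variable {V : Type u} {t : Setoid V} {C : Set V}

/-- Every vertex of `C` forms a class of `t` by itself. -/
def IsDiscreteOn (t : Setoid V) (C : Set V) : Prop :=
  ∀ x ∈ C, ∀ y, t x y → x = y

/-- The classes of `t` other than those of vertices in `C`. -/
def outerClasses (t : Setoid V) (C : Set V) : Set (Quotient t) :=
  (Quotient.mk t '' C)ᶜ

theorem IsDiscreteOn.mk_mem_outerClasses (ht : IsDiscreteOn t C) {x : V} :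
    Quotient.mk t x ∈ outerClasses t C ↔ x ∉ C := by
  refine not_congr ⟨?_, Set.mem_image_of_mem _⟩
  rintro ⟨y, hy, hyx⟩
  exact ht y hy x (Quotient.exact hyx) ▸ hy

theorem IsDiscreteOn.injOn_mk (ht : IsDiscreteOn t C) : Set.InjOn (Quotient.mk t) C :=
  fun x hx y _ hxy => ht x hx y (Quotient.exact hxy)

theorem disjoint_image_outerClasses {B : Set V} (hB : B ⊆ C) :
    Disjoint (Quotient.mk t '' B) (outerClasses t C) :=
  (disjoint_compl_right (a := Quotient.mk t '' C)).mono_left (Set.image_mono hB)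

theorem IsDiscreteOn.ncard_image_union_outerClasses [Finite V] (ht : IsDiscreteOn t C) {B : Set V}
    (hB : B ⊆ C) :
    (Quotient.mk t '' B ∪ outerClasses t C).ncard = B.ncard + (outerClasses t C).ncard := by
  rw [Set.ncard_union_eq (disjoint_image_outerClasses hB),
    (ht.injOn_mk.mono hB).ncard_image]

theorem IsDiscreteOn.numClasses_eq [Finite V] (ht : IsDiscreteOn t C) :
    numClasses t = C.ncard + (outerClasses t C).ncard := by
  rw [← ht.ncard_image_union_outerClasses subset_rfl, outerClasses, Set.union_compl_self,
    Set.ncard_univ, numClasses]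

open scoped Classical in
theorem classProd_comap_eq_prod_outerClasses [Fintype V] (h : Set V → ℚ) {ρ : V → V} {B : Set V}
    (hrange : Set.range (Quotient.mk t ∘ ρ) = Quotient.mk t '' B ∪ outerClasses t C)
    (hone : ∀ x ∈ B, h (Quotient.mk t ∘ ρ ⁻¹' {Quotient.mk t x}) = 1) :
    classProd h (t.comap ρ) =
      ∏ c with c ∈ outerClasses t C, h (Quotient.mk t ∘ ρ ⁻¹' {c}) := by
  rw [classProd_comap]
  symm
  refine Finset.prod_subset (fun c => ?_) fun c hc hout => ?_
  · simp only [Finset.mem_filter_univ, hrange]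
    exact Or.inr
  · simp only [Finset.mem_filter_univ, hrange] at hc hout
    obtain ⟨x, hx, rfl⟩ := hc.resolve_right hout
    exact hone x hx

end DiscreteSet

section ContractClique

variable {V : Type u} {E : Type v} {G : Multigraph V E} {t : Setoid V} {C : Set V} {c₀ : V}

open scoped Classical in
/-- The retraction of `V` sending all of `C` to `c₀`. -/
noncomputable def collapseMap (C : Set V) (c₀ x : V) : V := if x ∈ C then c₀ else x

theorem collapseMap_of_mem {x : V} (h : x ∈ C) : collapseMap C c₀ x = c₀ := if_pos h

theorem collapseMap_of_notMem {x : V} (h : x ∉ C) : collapseMap C c₀ x = x := if_neg h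

theorem IsClique.contractSetoid_edgesWithin (hC : G.IsClique C) {x y : V} (hx : x ∈ C)
    (hy : y ∈ C) : G.contractSetoid (G.edgesWithin C) x y := by
  obtain rfl | hne := eq_or_ne x y
  · exact (G.contractSetoid _).refl x
  · obtain ⟨e, he, -⟩ := hC.1 x hx y hy hne
    exact G.contractSetoid_rel ((mem_edgesWithin_iff he).2 ⟨hx, hy⟩) he

theorem IsClique.sup_contractSetoid_edgesWithin (hC : G.IsClique C) (ht : IsDiscreteOn t C)
    (hc₀ : c₀ ∈ C) :
    t ⊔ G.contractSetoid (G.edgesWithin C) = t.comap (collapseMap C c₀) := by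
  apply sup_eq_comap_of_retraction
  · intro x y hxy
    by_cases hx : x ∈ C
    · rw [ht x hx y hxy]
    · have hy : y ∉ C := fun hy => hx (ht y hy x (t.symm hxy) ▸ hy)
      rwa [Setoid.comap_rel, collapseMap_of_notMem hx, collapseMap_of_notMem hy]
  · refine G.contractSetoid_le_iff.2 fun e he u v huv => ?_
    obtain ⟨hu, hv⟩ := (mem_edgesWithin_iff huv).1 he
    rw [Setoid.comap_rel, collapseMap_of_mem hu, collapseMap_of_mem hv]
  · intro x
    by_cases hx : x ∈ C
    · rw [collapseMap_of_mem hx]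
      exact (le_sup_right : _ ≤ t ⊔ G.contractSetoid (G.edgesWithin C))
        (hC.contractSetoid_edgesWithin hx hc₀)
    · rw [collapseMap_of_notMem hx]

theorem IsDiscreteOn.range_collapseMap (ht : IsDiscreteOn t C) (hc₀ : c₀ ∈ C) :
    Set.range (Quotient.mk t ∘ collapseMap C c₀) = Quotient.mk t '' {c₀} ∪ outerClasses t C := by
  ext c
  constructor
  · rintro ⟨x, rfl⟩
    by_cases hx : x ∈ C
    · exact Or.inl ⟨c₀, rfl, congrArg _ (collapseMap_of_mem hx).symm⟩
    · rw [Function.comp_apply, collapseMap_of_notMem hx]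
      exact Or.inr (ht.mk_mem_outerClasses.2 hx)
  · rintro (⟨x, hx, rfl⟩ | hc)
    · exact ⟨c₀, congrArg _ ((collapseMap_of_mem hc₀).trans hx.symm)⟩
    · obtain ⟨x, rfl⟩ := Quotient.exists_rep c
      exact ⟨x, congrArg _ (collapseMap_of_notMem (ht.mk_mem_outerClasses.1 hc))⟩

theorem IsDiscreteOn.preimage_collapseMap (ht : IsDiscreteOn t C) (hc₀ : c₀ ∈ C) {c : Quotient t}
    (hc : c ∈ outerClasses t C) :
    Quotient.mk t ∘ collapseMap C c₀ ⁻¹' {c} = Quotient.mk t ⁻¹' {c} := by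
  ext x
  rw [Set.mem_preimage, Function.comp_apply, Set.mem_preimage]
  by_cases hx : x ∈ C
  · have hout {y : V} (hy : y ∈ C) : Quotient.mk t y ≠ c := by
      rintro rfl
      exact ht.mk_mem_outerClasses.1 hc hy
    exact iff_of_false (collapseMap_of_mem hx ▸ hout hc₀) (hout hx)
  · rw [collapseMap_of_notMem hx]

theorem IsClique.numClasses_sup_edgesWithin [Finite V] (hC : G.IsClique C) (ht : IsDiscreteOn t C)
    (hne : C.Nonempty) :
    numClasses (t ⊔ G.contractSetoid (G.edgesWithin C)) = 1 + (outerClasses t C).ncard := by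
  obtain ⟨c₀, hc₀⟩ := hne
  rw [hC.sup_contractSetoid_edgesWithin ht hc₀, numClasses_comap, ht.range_collapseMap hc₀,
    ht.ncard_image_union_outerClasses (Set.singleton_subset_iff.2 hc₀), Set.ncard_singleton]

open scoped Classical in
theorem IsClique.classProd_starWeight_sup_edgesWithin [Fintype V] (hC : G.IsClique C)
    (ht : IsDiscreteOn t C) (hc₀ : c₀ ∈ C) (M : Set E) (w : E → V) :
    classProd (starWeight c₀ M w) (t ⊔ G.contractSetoid (G.edgesWithin C)) =
      ∏ c with c ∈ outerClasses t C, ((M ∩ w ⁻¹' (Quotient.mk t ⁻¹' {c})).ncard : ℚ) := by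
  rw [hC.sup_contractSetoid_edgesWithin ht hc₀,
    classProd_comap_eq_prod_outerClasses _ (ht.range_collapseMap hc₀)]
  · refine Finset.prod_congr rfl fun c hc => ?_
    rw [Finset.mem_filter_univ] at hc
    rw [ht.preimage_collapseMap hc₀ hc, starWeight_of_notMem]
    rintro rfl
    exact ht.mk_mem_outerClasses.1 hc hc₀
  · rintro _ rfl
    exact starWeight_of_mem (congrArg _ (collapseMap_of_mem hc₀))

end ContractClique

section Attachment

variable {V : Type u} {E : Type v} {G : Multigraph V E} {t : Setoid V} {C : Set V} {M : Set E}
  {a w : E → V}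

/-- The edges of `M` join distinct vertices of `C` to vertices outside `C`; `a e` and `w e` are the
inner and the outer end of `e`. -/
structure IsAttachment (G : Multigraph V E) (C : Set V) (M : Set E) (a w : E → V) : Prop where
  inc_eq : ∀ e ∈ M, G.inc e = s(a e, w e)
  inner_mem : ∀ e ∈ M, a e ∈ C
  outer_notMem : ∀ e ∈ M, w e ∉ C
  injOn_inner : Set.InjOn a M

open scoped Classical in
/-- The retraction of `V` sending the inner end of each edge of `M` to its outer end. -/
noncomputable def attachMap (M : Set E) (a w : E → V) (x : V) : V :=
  if h : ∃ e ∈ M, a e = x then w h.choose else x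

theorem attachMap_of_notMem {x : V} (h : x ∉ a '' M) : attachMap M a w x = x := dif_neg h

namespace IsAttachment

theorem attachMap_inner (hM : IsAttachment G C M a w) {e : E} (he : e ∈ M) :
    attachMap M a w (a e) = w e := by
  have h : ∃ f ∈ M, a f = a e := ⟨e, he, rfl⟩
  rw [attachMap, dif_pos h, hM.injOn_inner h.choose_spec.1 he h.choose_spec.2]

theorem image_inner_subset (hM : IsAttachment G C M a w) : a '' M ⊆ C :=
  Set.image_subset_iff.2 hM.inner_mem

theorem attachMap_of_notMem_clique (hM : IsAttachment G C M a w) {x : V} (hx : x ∉ C) :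
    attachMap M a w x = x :=
  attachMap_of_notMem fun h => hx (hM.image_inner_subset h)

theorem sup_contractSetoid (hM : IsAttachment G C M a w) (ht : IsDiscreteOn t C) :
    t ⊔ G.contractSetoid M = t.comap (attachMap M a w) := by
  apply sup_eq_comap_of_retraction
  · intro x y hxy
    by_cases hx : x ∈ C
    · rw [ht x hx y hxy]
    · have hy : y ∉ C := fun hy => hx (ht y hy x (t.symm hxy) ▸ hy)
      rwa [Setoid.comap_rel, hM.attachMap_of_notMem_clique hx, hM.attachMap_of_notMem_clique hy]
  · refine G.contractSetoid_le_iff.2 fun e he u v huv => ?_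
    have hends : attachMap M a w (a e) = attachMap M a w (w e) := by
      rw [hM.attachMap_inner he, hM.attachMap_of_notMem_clique (hM.outer_notMem e he)]
    rw [Setoid.comap_rel]
    obtain ⟨rfl, rfl⟩ | ⟨rfl, rfl⟩ := Sym2.eq_iff.1 ((hM.inc_eq e he).symm.trans huv)
    · rw [hends]
    · rw [hends]
  · intro x
    by_cases hx : x ∈ a '' M
    · obtain ⟨e, he, rfl⟩ := hx
      rw [hM.attachMap_inner he]
      exact (le_sup_right : _ ≤ t ⊔ G.contractSetoid M) (G.contractSetoid_rel he (hM.inc_eq e he))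
    · rw [attachMap_of_notMem hx]

theorem range_attachMap (hM : IsAttachment G C M a w) (ht : IsDiscreteOn t C) :
    Set.range (Quotient.mk t ∘ attachMap M a w) =
      Quotient.mk t '' (C \ a '' M) ∪ outerClasses t C := by
  ext c
  constructor
  · rintro ⟨x, rfl⟩
    rw [Function.comp_apply]
    by_cases hx : x ∈ a '' M
    · obtain ⟨e, he, rfl⟩ := hx
      rw [hM.attachMap_inner he]
      exact Or.inr (ht.mk_mem_outerClasses.2 (hM.outer_notMem e he))
    · rw [attachMap_of_notMem hx]
      by_cases hxC : x ∈ C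
      · exact Or.inl ⟨x, ⟨hxC, hx⟩, rfl⟩
      · exact Or.inr (ht.mk_mem_outerClasses.2 hxC)
  · rintro (⟨x, hx, rfl⟩ | hc)
    · exact ⟨x, congrArg _ (attachMap_of_notMem hx.2)⟩
    · obtain ⟨x, rfl⟩ := Quotient.exists_rep c
      exact ⟨x, congrArg _ (hM.attachMap_of_notMem_clique (ht.mk_mem_outerClasses.1 hc))⟩

theorem inter_preimage_attachMap_outer (hM : IsAttachment G C M a w) (ht : IsDiscreteOn t C)
    {c : Quotient t} (hc : c ∈ outerClasses t C) :
    C ∩ Quotient.mk t ∘ attachMap M a w ⁻¹' {c} = a '' (M ∩ w ⁻¹' (Quotient.mk t ⁻¹' {c})) := by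
  ext x
  constructor
  · rintro ⟨hxC, rfl⟩
    by_cases hx : x ∈ a '' M
    · obtain ⟨e, he, rfl⟩ := hx
      exact ⟨e, ⟨he, congrArg _ (hM.attachMap_inner he).symm⟩, rfl⟩
    · rw [Function.comp_apply, attachMap_of_notMem hx] at hc
      exact absurd hxC (ht.mk_mem_outerClasses.1 hc)
  · rintro ⟨e, ⟨he, rfl⟩, rfl⟩
    exact ⟨hM.inner_mem e he, congrArg _ (hM.attachMap_inner he)⟩

theorem inter_preimage_attachMap_inner (hM : IsAttachment G C M a w) (ht : IsDiscreteOn t C)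
    {x : V} (hx : x ∈ C \ a '' M) :
    C ∩ Quotient.mk t ∘ attachMap M a w ⁻¹' {Quotient.mk t x} = {x} := by
  refine Set.eq_singleton_iff_unique_mem.2
    ⟨⟨hx.1, congrArg _ (attachMap_of_notMem hx.2)⟩, fun y hy => ?_⟩
  have hxy : x = attachMap M a w y := ht x hx.1 _ (t.symm (Quotient.exact hy.2))
  by_cases hyM : y ∈ a '' M
  · obtain ⟨e, he, rfl⟩ := hyM
    rw [hM.attachMap_inner he] at hxy
    exact absurd (hxy ▸ hx.1) (hM.outer_notMem e he)
  · rw [hxy, attachMap_of_notMem hyM]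

theorem isForestOver [Finite V] (hM : IsAttachment G C M a w) (ht : IsDiscreteOn t C) :
    G.IsForestOver t M := by
  rw [IsForestOver, hM.sup_contractSetoid ht, numClasses_comap, hM.range_attachMap ht,
    ht.ncard_image_union_outerClasses Set.sdiff_subset, ht.numClasses_eq,
    ← hM.injOn_inner.ncard_image, ← Set.ncard_sdiff_add_ncard_of_subset hM.image_inner_subset]
  ring

open scoped Classical in
theorem classProd_ncard_inter_sup [Fintype V] (hM : IsAttachment G C M a w)
    (ht : IsDiscreteOn t C) :
    classProd (fun X => ((C ∩ X).ncard : ℚ)) (t ⊔ G.contractSetoid M) =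
      ∏ c with c ∈ outerClasses t C, ((M ∩ w ⁻¹' (Quotient.mk t ⁻¹' {c})).ncard : ℚ) := by
  rw [hM.sup_contractSetoid ht, classProd_comap_eq_prod_outerClasses _ (hM.range_attachMap ht)]
  · refine Finset.prod_congr rfl fun c hc => ?_
    rw [hM.inter_preimage_attachMap_outer ht ((Finset.mem_filter_univ c).1 hc),
      (hM.injOn_inner.mono Set.inter_subset_left).ncard_image]
  · intro x hx
    rw [hM.inter_preimage_attachMap_inner ht hx, Set.ncard_singleton, Nat.cast_one]

variable [Finite V] [Fintype E] [Nonempty V]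

theorem treeCount_edgesWithin_sup (hM : IsAttachment G C M a w) (hC : G.IsClique C)
    (hne : C.Nonempty) (ht : IsDiscreteOn t C) :
    (G.treeCount (G.edgesWithin C) (t ⊔ G.contractSetoid M) : ℚ) =
      (C.ncard : ℚ) ^ (C.ncard - 2 - M.ncard : ℤ) * ((C.ncard : ℚ) ^ (outerClasses t C).ncard *
        G.treeCount M (t ⊔ G.contractSetoid (G.edgesWithin C))) := by
  have := Fintype.ofFinite V
  have hn : (C.ncard : ℚ) ≠ 0 := Nat.cast_ne_zero.2 (Set.ncard_ne_zero_of_mem hne.some_mem)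
  have hexp : (numClasses (t ⊔ G.contractSetoid M) - 2 : ℤ) =
      (C.ncard - 2 - M.ncard) + (outerClasses t C).ncard := by
    have hforest := hM.isForestOver ht
    rw [IsForestOver, ht.numClasses_eq] at hforest
    omega
  have hhub : ∀ e ∈ M, (t ⊔ G.contractSetoid (G.edgesWithin C)) (a e) hne.some := fun e he =>
    (le_sup_right : _ ≤ t ⊔ G.contractSetoid (G.edgesWithin C))
      (hC.contractSetoid_edgesWithin (hM.inner_mem e he) hne.some_mem)
  rw [hC.treeCount_edgesWithin hne, treeCount_star hM.inc_eq hhub,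
    hM.classProd_ncard_inter_sup ht, hC.classProd_starWeight_sup_edgesWithin ht hne.some_mem, hexp,
    zpow_add₀ hn, zpow_natCast, mul_assoc]

end IsAttachment

end Attachment

section EdgesMeeting

variable {V : Type u} {E : Type v} {G : Multigraph V E} {s : Setoid V} {A : Set E} {C : Set V}

/-- The edges with at least one end in `C`. -/
def edgesMeeting (G : Multigraph V E) (C : Set V) : Set E :=
  {e | ∃ x ∈ C, x ∈ G.inc e}

theorem edgesMeeting_eq_union (G : Multigraph V E) (C : Set V) :
    G.edgesMeeting C = G.edgesWithin C ∪ G.edgeBoundary C := by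
  ext e
  constructor
  · rintro ⟨x, hx, hxe⟩
    obtain ⟨y, hxy⟩ := hxe
    by_cases hy : y ∈ C
    · exact Or.inl ((mem_edgesWithin_iff hxy).2 ⟨hx, hy⟩)
    · exact Or.inr ⟨x, y, hxy, hx, hy⟩
  · rintro (he | ⟨x, y, hxy, hx, -⟩)
    · exact ⟨_, he _ (Sym2.out_fst_mem _), Sym2.out_fst_mem _⟩
    · exact ⟨x, hx, hxy ▸ Sym2.mem_mk_left x y⟩

theorem edgesWithin_subset_edgesMeeting : G.edgesWithin C ⊆ G.edgesMeeting C :=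
  G.edgesMeeting_eq_union C ▸ Set.subset_union_left

theorem edgeBoundary_subset_edgesMeeting : G.edgeBoundary C ⊆ G.edgesMeeting C :=
  G.edgesMeeting_eq_union C ▸ Set.subset_union_right

theorem disjoint_edgesWithin_edgeBoundary : Disjoint (G.edgesWithin C) (G.edgeBoundary C) :=
  Set.disjoint_left.2 fun _ he ⟨_, _, hxy, _, hy⟩ => hy ((mem_edgesWithin_iff hxy).1 he).2

theorem isDiscreteOn_bot : IsDiscreteOn ⊥ C := fun _ _ _ h => h

open scoped Classical in
theorem isDiscreteOn_iff_le_ker :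
    IsDiscreteOn s C ↔ s ≤ Setoid.ker fun x => if x ∈ C then some x else none := by
  simp only [IsDiscreteOn, Setoid.le_def, Setoid.ker_def]
  refine ⟨fun h x y hxy => ?_, fun h x hx y hxy => ?_⟩
  · by_cases hx : x ∈ C
    · rw [h x hx y hxy]
    · have hy : y ∉ C := fun hy => hx (h y hy x (s.symm hxy) ▸ hy)
      rw [if_neg hx, if_neg hy]
  · have hxy := h hxy
    rw [if_pos hx] at hxy
    grind

theorem IsDiscreteOn.sup_contractSetoid (hs : IsDiscreteOn s C)
    (hA : Disjoint A (G.edgesMeeting C)) : IsDiscreteOn (s ⊔ G.contractSetoid A) C := by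
  rw [isDiscreteOn_iff_le_ker] at hs ⊢
  refine sup_le hs (G.contractSetoid_le_iff.2 fun e he u v huv => ?_)
  have hout : ∀ x ∈ G.inc e, x ∉ C := fun x hxe hx =>
    Set.disjoint_left.1 hA he ⟨x, hx, hxe⟩
  rw [Setoid.ker_def, if_neg (hout u (huv ▸ Sym2.mem_mk_left u v)),
    if_neg (hout v (huv ▸ Sym2.mem_mk_right u v))]

theorem IsClique.isForestOver_sup_edgesWithin [Finite V] (hC : G.IsClique C)
    (hne : C.Nonempty) (hs : IsDiscreteOn s C) (hA : Disjoint A (G.edgesMeeting C)) :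
    G.IsForestOver (s ⊔ G.contractSetoid (G.edgesWithin C)) A ↔ G.IsForestOver s A := by
  have ht := hs.sup_contractSetoid hA
  rw [IsForestOver, IsForestOver, sup_right_comm, hC.numClasses_sup_edgesWithin ht hne,
    hC.numClasses_sup_edgesWithin hs hne, ht.numClasses_eq, hs.numClasses_eq]
  omega

theorem IsClique.ncard_inter_edgeBoundary [Finite V] [Finite E] [Nonempty V]
    (hC : G.IsClique C) (hne : C.Nonempty) (hs : IsDiscreteOn s C)
    (hA : Disjoint A (G.edgesMeeting C)) {T : Set E}
    (hT : G.IsTreeOver (s ⊔ G.contractSetoid (G.edgesWithin C)) T)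
    (hTA : T \ G.edgeBoundary C = A) :
    (T ∩ G.edgeBoundary C).ncard = (outerClasses (s ⊔ G.contractSetoid A) C).ncard := by
  rw [← Set.sdiff_union_inter T (G.edgeBoundary C), hTA, isTreeOver_union
    (hA.mono_right (Set.inter_subset_right.trans edgeBoundary_subset_edgesMeeting))] at hT
  have hcard := hT.2.2
  rw [sup_right_comm, hC.numClasses_sup_edgesWithin (hs.sup_contractSetoid hA) hne] at hcard
  omega

end EdgesMeeting

section SingleClique

variable {V : Type u} {E : Type v} [Finite V] [Fintype E] [Nonempty V] {G : Multigraph V E}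
  {s : Setoid V} {A R : Set E} {C : Set V} {a w : E → V}

open scoped Classical in
theorem card_trees_sdiff_eq (h : Disjoint A R) :
    Finset.card {T : Set E | G.IsTreeOver s T ∧ T \ R = A} =
      if G.IsForestOver s A then G.treeCount R (s ⊔ G.contractSetoid A) else 0 := by
  have hunion {T : Set E} (hT : T \ R = A) : A ∪ T ∩ R = T := by
    rw [← hT, Set.union_comm, Set.inter_union_sdiff]
  split_ifs with hA
  · refine Finset.card_nbij' (· ∩ R) (A ∪ ·) ?_ ?_ ?_ ?_
    · simp only [Finset.coe_filter_univ]
      rintro T ⟨hT, hTA⟩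
      rw [← hunion hTA, isTreeOver_union (h.mono_right Set.inter_subset_right)] at hT
      exact ⟨Set.inter_subset_right, hT.2⟩
    · simp only [Finset.coe_filter_univ]
      rintro Z ⟨hZR, hZ⟩
      refine ⟨(isTreeOver_union (h.mono_right hZR)).2 ⟨hA, hZ⟩, ?_⟩
      rw [Set.union_sdiff_distrib, h.sdiff_eq_left, Set.sdiff_eq_empty.2 hZR, Set.union_empty]
    · intro T hT
      exact hunion ((Finset.mem_filter_univ T).1 hT).2
    · intro Z hZ
      have hZR := ((Finset.mem_filter_univ Z).1 hZ).1
      simp only [Set.union_inter_distrib_right, h.inter_eq, Set.inter_eq_left.2 hZR,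
        Set.empty_union]
  · rw [Finset.card_eq_zero, Finset.filter_eq_empty_iff]
    rintro T - ⟨hT, hTA⟩
    rw [← hunion hTA, isTreeOver_union (h.mono_right Set.inter_subset_right)] at hT
    exact hA hT.1

open scoped Classical in
theorem IsAttachment.card_trees_fiber (hM : IsAttachment G C (G.edgeBoundary C) a w)
    (hs : IsDiscreteOn s C) (hA : Disjoint A (G.edgesMeeting C)) :
    Finset.card {T : Set E |
        (G.IsTreeOver s T ∧ G.edgeBoundary C ⊆ T) ∧ T \ G.edgesMeeting C = A} =
      if G.IsForestOver s A then
        G.treeCount (G.edgesWithin C) (s ⊔ G.contractSetoid A ⊔ G.contractSetoid (G.edgeBoundary C))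
      else 0 := by
  have hAM : Disjoint A (G.edgeBoundary C) := hA.mono_right edgeBoundary_subset_edgesMeeting
  have hAS : Disjoint A (G.edgesWithin C) := hA.mono_right edgesWithin_subset_edgesMeeting
  have hMS := (disjoint_edgesWithin_edgeBoundary (G := G) (C := C)).symm
  have htrace (T : Set E) : G.edgeBoundary C ⊆ T ∧ T \ G.edgesMeeting C = A ↔
      T \ G.edgesWithin C = A ∪ G.edgeBoundary C := by
    rw [edgesMeeting_eq_union, ← Set.sdiff_sdiff]
    constructor
    · rintro ⟨hMT, rfl⟩
      rw [Set.sdiff_union_of_subset (Set.subset_sdiff.2 ⟨hMT, hMS⟩)]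
    · intro hT
      rw [hT, Set.union_sdiff_right, hAM.sdiff_eq_left]
      exact ⟨(Set.subset_union_right.trans hT.superset).trans Set.sdiff_subset, rfl⟩
  have hforest : G.IsForestOver s (A ∪ G.edgeBoundary C) ↔ G.IsForestOver s A := by
    rw [isForestOver_union hAM]
    exact and_iff_left (hM.isForestOver (hs.sup_contractSetoid hA))
  simp only [and_assoc, htrace, card_trees_sdiff_eq (hAS.union_left hMS), hforest,
    contractSetoid_union, sup_assoc]

open scoped Classical in
theorem IsClique.sum_contracted_trees_fiber (hC : G.IsClique C) (hne : C.Nonempty)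
    (hs : IsDiscreteOn s C) (hA : Disjoint A (G.edgesMeeting C)) :
    ∑ T : Set E with G.IsTreeOver (s ⊔ G.contractSetoid (G.edgesWithin C)) T ∧
        T \ G.edgesMeeting C = A, (C.ncard : ℚ) ^ (T ∩ G.edgeBoundary C).ncard =
      if G.IsForestOver s A then
        (C.ncard : ℚ) ^ (outerClasses (s ⊔ G.contractSetoid A) C).ncard *
          G.treeCount (G.edgeBoundary C)
            (s ⊔ G.contractSetoid A ⊔ G.contractSetoid (G.edgesWithin C))
      else 0 := by
  have htrace (T : Set E) : G.IsTreeOver (s ⊔ G.contractSetoid (G.edgesWithin C)) T ∧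
      T \ G.edgesMeeting C = A ↔ G.IsTreeOver (s ⊔ G.contractSetoid (G.edgesWithin C)) T ∧
        T \ G.edgeBoundary C = A :=
    and_congr_right fun hT => by
      rw [edgesMeeting_eq_union, ← Set.sdiff_sdiff, (hT.disjoint_of_le le_sup_right).sdiff_eq_left]
  have hcard := card_trees_sdiff_eq (G := G) (s := s ⊔ G.contractSetoid (G.edgesWithin C))
    (hA.mono_right edgeBoundary_subset_edgesMeeting)
  simp only [htrace]
  rw [Finset.sum_congr rfl fun T hT => congrArg ((C.ncard : ℚ) ^ ·)
      (hC.ncard_inter_edgeBoundary hne hs hA ((Finset.mem_filter_univ T).1 hT).1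
        ((Finset.mem_filter_univ T).1 hT).2),
    Finset.sum_const, hcard, nsmul_eq_mul, mul_comm]
  simp only [hC.isForestOver_sup_edgesWithin hne hs hA, sup_right_comm, Nat.cast_ite,
    Nat.cast_zero, mul_ite, mul_zero]

open scoped Classical in
theorem IsAttachment.sum_trees_contract_clique (hM : IsAttachment G C (G.edgeBoundary C) a w)
    (hC : G.IsClique C) (hne : C.Nonempty) (hs : IsDiscreteOn s C) {g : Set E → ℚ}
    (hg : ∀ T, g (T \ G.edgesMeeting C) = g T) :
    ∑ T : Set E with G.IsTreeOver s T ∧ G.edgeBoundary C ⊆ T, g T =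
      (C.ncard : ℚ) ^ (C.ncard - 2 - (G.edgeBoundary C).ncard : ℤ) *
        ∑ T : Set E with G.IsTreeOver (s ⊔ G.contractSetoid (G.edgesWithin C)) T,
          (C.ncard : ℚ) ^ (T ∩ G.edgeBoundary C).ncard * g T := by
  have htrace (T : Set E) : T \ G.edgesMeeting C ∈
      ({A | Disjoint A (G.edgesMeeting C)} : Finset (Set E)) :=
    (Finset.mem_filter_univ _).2 Set.disjoint_sdiff_left
  rw [← Finset.sum_fiberwise_of_maps_to (fun T _ => htrace T) g,
    ← Finset.sum_fiberwise_of_maps_to (fun T _ => htrace T) fun T => _ * g T, Finset.mul_sum]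
  refine Finset.sum_congr rfl fun A hA => ?_
  have hA := (Finset.mem_filter_univ A).1 hA
  have hgA {F : Finset (Set E)} {T : Set E} (hT : T ∈ F.filter (· \ G.edgesMeeting C = A)) :
      g T = g A := by
    rw [← hg T, (Finset.mem_filter.1 hT).2]
  rw [Finset.sum_congr rfl fun T hT => hgA hT,
    Finset.sum_congr rfl fun T hT => congrArg (_ * ·) (hgA hT), ← Finset.sum_mul,
    Finset.sum_const, nsmul_eq_mul, Finset.filter_filter, Finset.filter_filter,
    hM.card_trees_fiber hs hA, hC.sum_contracted_trees_fiber hne hs hA]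
  split_ifs
  · rw [hM.treeCount_edgesWithin_sup hC hne (hs.sup_contractSetoid hA)]
    ring
  · ring

end SingleClique

section CliqueFamily

variable {V : Type u} {E : Type v} {G : Multigraph V E} {ι : Type*} {C : ι → Set V} {N : Set E}

theorem isDiscreteOn_contractSetoid_edgesWithin {J : Finset ι} {X : Set V}
    (hsep : ∀ i ∈ J, Disjoint (G.edgesMeeting (C i)) (G.edgesMeeting X)) :
    IsDiscreteOn (G.contractSetoid (⋃ i ∈ J, G.edgesWithin (C i))) X := by
  rw [← bot_sup_eq (G.contractSetoid _)]
  refine isDiscreteOn_bot.sup_contractSetoid (Set.disjoint_iUnion₂_left.2 fun i hi => ?_)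
  exact (hsep i hi).mono_left edgesWithin_subset_edgesMeeting

variable [Finite V] [Fintype E] [Nonempty V]

open scoped Classical in
theorem IsAttachment.sum_trees_contract_insert {J : Finset ι} {j : ι} (hj : j ∉ J) {a w : E → V}
    (hM : IsAttachment G (C j) (G.edgeBoundary (C j)) a w) (hC : G.IsClique (C j))
    (hne : (C j).Nonempty)
    (hsep : ∀ i ∈ J, Disjoint (G.edgesMeeting (C i)) (G.edgesMeeting (C j)))
    (hN : Disjoint N (G.edgesMeeting (C j))) :
    ∑ T : Set E with G.IsTreeOver (G.contractSetoid (⋃ i ∈ J, G.edgesWithin (C i))) T ∧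
        G.edgeBoundary (C j) ∪ N ⊆ T,
        ∏ i ∈ J, ((C i).ncard : ℚ) ^ (T ∩ G.edgeBoundary (C i)).ncard =
      ((C j).ncard : ℚ) ^ ((C j).ncard - 2 - (G.edgeBoundary (C j)).ncard : ℤ) *
        ∑ T : Set E with
          G.IsTreeOver (G.contractSetoid (⋃ i ∈ insert j J, G.edgesWithin (C i))) T ∧ N ⊆ T,
          ∏ i ∈ insert j J, ((C i).ncard : ℚ) ^ (T ∩ G.edgeBoundary (C i)).ncard := by
  let g (T : Set E) : ℚ :=
    if N ⊆ T then ∏ i ∈ J, ((C i).ncard : ℚ) ^ (T ∩ G.edgeBoundary (C i)).ncard else 0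
  have hg (T : Set E) : g (T \ G.edgesMeeting (C j)) = g T := by
    refine if_congr (Set.subset_sdiff.trans (and_iff_left hN)) (Finset.prod_congr rfl ?_) rfl
    intro i hi
    have hdisj : Disjoint (T ∩ G.edgeBoundary (C i)) (G.edgesMeeting (C j)) :=
      (hsep i hi).mono_left (Set.inter_subset_right.trans edgeBoundary_subset_edgesMeeting)
    rw [Set.sdiff_inter_right_comm, hdisj.sdiff_eq_left]
  have key := hM.sum_trees_contract_clique hC hne (isDiscreteOn_contractSetoid_edgesWithin hsep) hg
  simp only [g, mul_ite, mul_zero, ← Finset.sum_filter, Finset.filter_filter, and_assoc,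
    ← Set.union_subset_iff, ← contractSetoid_union] at key
  simp only [key, Finset.set_biUnion_insert, Finset.prod_insert hj,
    Set.union_comm (G.edgesWithin (C j))]

open scoped Classical in
theorem card_trees_eq_sum_contract_cliques (J : Finset ι) (hC : ∀ i ∈ J, G.IsClique (C i))
    (hne : ∀ i ∈ J, (C i).Nonempty)
    (hM : ∀ i ∈ J, ∃ a w, IsAttachment G (C i) (G.edgeBoundary (C i)) a w)
    (hsep : (J : Set ι).PairwiseDisjoint fun i => G.edgesMeeting (C i))
    (hN : ∀ i ∈ J, Disjoint N (G.edgesMeeting (C i))) :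
    (Finset.card {T : Set E | G.IsTreeOver ⊥ T ∧ (⋃ i ∈ J, G.edgeBoundary (C i)) ∪ N ⊆ T} : ℚ) =
      (∏ i ∈ J, ((C i).ncard : ℚ) ^ ((C i).ncard - 2 - (G.edgeBoundary (C i)).ncard : ℤ)) *
        ∑ T : Set E with
          G.IsTreeOver (G.contractSetoid (⋃ i ∈ J, G.edgesWithin (C i))) T ∧ N ⊆ T,
          ∏ i ∈ J, ((C i).ncard : ℚ) ^ (T ∩ G.edgeBoundary (C i)).ncard := by
  induction J using Finset.induction_on generalizing N with
  | empty => simp [contractSetoid_empty]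
  | insert j J hj ih =>
    rw [Finset.forall_mem_insert] at hC hne hM hN
    rw [Finset.coe_insert, Set.pairwiseDisjoint_insert_of_notMem hj] at hsep
    obtain ⟨a, w, hMj⟩ := hM.1
    have hboundary : ∀ i ∈ J, Disjoint (G.edgeBoundary (C j) ∪ N) (G.edgesMeeting (C i)) :=
      fun i hi => ((hsep.2 i hi).mono_left edgeBoundary_subset_edgesMeeting).union_left (hN.2 i hi)
    rw [Finset.set_biUnion_insert, Set.union_comm (G.edgeBoundary (C j)), Set.union_assoc,
      ih hC.2 hne.2 hM.2 hsep.1 hboundary, hMj.sum_trees_contract_insert hj hC.1 hne.1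
        (fun i hi => (hsep.2 i hi).symm) hN.1, Finset.prod_insert hj]
    ring

end CliqueFamily

section Contraction

variable {V : Type u} {E : Type v} {G : Multigraph V E} {W N : Set E}

theorem isSpanningTree_contract_iff {T : Set {e // e ∉ W}} :
    (G.contract W).IsSpanningTree T ↔ G.IsTreeOver (G.contractSetoid W) (Subtype.val '' T) := by
  rw [IsSpanningTree, IsTreeOver, connectedOn_iff_contractSetoid_eq_top, ← contractSetoid_contract,
    Set.ncard_image_of_injective T Subtype.val_injective, numClasses, Setoid.eq_top_iff,
    Setoid.eq_top_iff]
  exact and_congr_left' (Quotient.mk_surjective.forall₂ (f := Quotient.mk _))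

theorem image_val_ST_contract [Finite V] [Finite E] [Nonempty V] (hN : Disjoint N W) :
    (Subtype.val '' ·) '' (G.contract W).ST (Subtype.val ⁻¹' N) =
      {T | G.IsTreeOver (G.contractSetoid W) T ∧ N ⊆ T} := by
  ext T
  constructor
  · rintro ⟨T, ⟨hT, hNT⟩, rfl⟩
    refine ⟨isSpanningTree_contract_iff.1 hT, fun e he => ?_⟩
    exact ⟨⟨e, Set.disjoint_left.1 hN he⟩, hNT he, rfl⟩
  · rintro ⟨hT, hNT⟩
    have himage : Subtype.val '' (Subtype.val ⁻¹' T : Set {e // e ∉ W}) = T :=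
      Set.image_preimage_eq_of_subset fun e he =>
        ⟨⟨e, Set.disjoint_left.1 (hT.disjoint_of_le le_rfl) he⟩, rfl⟩
    exact ⟨Subtype.val ⁻¹' T, ⟨isSpanningTree_contract_iff.2 (by rwa [himage]),
      Set.preimage_mono hNT⟩, himage⟩

open scoped Classical in
theorem finsum_ST_contract [Finite V] [Fintype E] [Nonempty V] {R : Type*} [AddCommMonoid R]
    (f : Set E → R) (hN : Disjoint N W) :
    ∑ᶠ T ∈ (G.contract W).ST (Subtype.val ⁻¹' N), f (Subtype.val '' T) =
      ∑ T with G.IsTreeOver (G.contractSetoid W) T ∧ N ⊆ T, f T := by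
  rw [← finsum_mem_image (Subtype.val_injective.image_injective.injOn), image_val_ST_contract hN,
    ← Finset.coe_filter_univ, finsum_mem_coe_finset]

open scoped Classical in
theorem tau_eq_card_trees [Fintype E] (M : Set E) :
    G.tau M = Finset.card {T : Set E | G.IsTreeOver ⊥ T ∧ M ⊆ T} := by
  rw [tau, ← Set.ncard_coe_finset, Finset.coe_filter_univ]
  simp only [ST, isSpanningTree_iff_isTreeOver_bot]

theorem ncard_incident_contract {C : Set V} {x : V} (hC : G.edgesWithin C ⊆ W)
    (hclass : ∀ y, G.contractSetoid W y x ↔ y ∈ C) (T : Set {e // e ∉ W}) :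
    {e ∈ T | Quotient.mk (G.contractSetoid W) x ∈ (G.contract W).inc e}.ncard =
      (Subtype.val '' T ∩ G.edgeBoundary C).ncard := by
  have hinc (e : {e // e ∉ W}) :
      Quotient.mk (G.contractSetoid W) x ∈ (G.contract W).inc e ↔ e.val ∈ G.edgeBoundary C := by
    have hmeet : Quotient.mk (G.contractSetoid W) x ∈ (G.contract W).inc e ↔
        e.val ∈ G.edgesMeeting C := by
      simp only [contract, Sym2.mem_map, Quotient.eq, hclass, edgesMeeting, Set.mem_ofPred_eq,
        and_comm]
    rw [hmeet, edgesMeeting_eq_union]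
    exact or_iff_right fun he => e.2 (hC he)
  rw [← Set.image_inter_preimage, Set.ncard_image_of_injective _ Subtype.val_injective]
  simp only [hinc]
  rfl

end Contraction

section StarAttachment

variable {V : Type u} {E : Type v} {G : Multigraph V E}

theorem StarComponents.eq_of_mem_inc {W : Set E} {D : Set V} (hstar : G.StarComponents W D)
    {e f : E} (he : e ∈ W) (hf : f ∈ W) {x : V} (hx : x ∉ D) (hxe : x ∈ G.inc e)
    (hxf : x ∈ G.inc f) : e = f := by
  obtain ⟨c, hc, hcenter⟩ := hstar e he
  have hee : G.EdgeConn W e e := ⟨x, x, hxe, hxe, Relation.ReflTransGen.refl⟩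
  have hef : G.EdgeConn W e f := ⟨x, x, hxe, hxf, Relation.ReflTransGen.refl⟩
  have hxc : x ≠ c := fun h => hx (h ▸ hc)
  have hinc : G.inc e = G.inc f :=
    ((Sym2.mem_and_mem_iff hxc).1 ⟨hxe, (hcenter e he hee).1⟩).trans
      ((Sym2.mem_and_mem_iff hxc).1 ⟨hxf, (hcenter f hf hef).1⟩).symm
  exact (hcenter f hf hef).2.2 e he hee hinc

theorem exists_isAttachment_edgeBoundary {C : Set V}
    (h : ∀ x ∈ C, ∀ e ∈ G.edgeBoundary C, ∀ f ∈ G.edgeBoundary C,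
      x ∈ G.inc e → x ∈ G.inc f → e = f) :
    ∃ a w, IsAttachment G C (G.edgeBoundary C) a w := by
  have hends (e : E) : ∃ a w, e ∈ G.edgeBoundary C → G.inc e = s(a, w) ∧ a ∈ C ∧ w ∉ C := by
    by_cases he : e ∈ G.edgeBoundary C
    · obtain ⟨a, w, haw⟩ := he
      exact ⟨a, w, fun _ => haw⟩
    · exact ⟨(G.inc e).out.1, (G.inc e).out.1, fun h => absurd h he⟩
  choose a w haw using hends
  have hmem {e : E} (he : e ∈ G.edgeBoundary C) : a e ∈ G.inc e :=
    (haw e he).1 ▸ Sym2.mem_mk_left _ _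
  exact ⟨a, w, fun e he => (haw e he).1, fun e he => (haw e he).2.1, fun e he => (haw e he).2.2,
    fun e he f hf hef => h _ (haw e he).2.1 e he f hf (hmem he) (hef ▸ hmem hf)⟩

theorem StarComponents.exists_isAttachment {W : Set E} {C D : Set V} (hstar : G.StarComponents W D)
    (hCD : Disjoint C D) (hCW : G.edgeBoundary C ⊆ W) :
    ∃ a w, IsAttachment G C (G.edgeBoundary C) a w :=
  exists_isAttachment_edgeBoundary fun _ hx _ he _ hf =>
    hstar.eq_of_mem_inc (hCW he) (hCW hf) (Set.disjoint_left.1 hCD hx)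

end StarAttachment

section CliquePartition

variable {V : Type u} {E : Type v} {G : Multigraph V E} {ι : Type*} {part : V → Option ι}

theorem index_eq_of_mem_inc
    (hbetween : ∀ i j, i ≠ j → G.edgesBetween (part ⁻¹' {some i}) (part ⁻¹' {some j}) = ∅)
    {e : E} {x y : V} (hxe : x ∈ G.inc e) (hye : y ∈ G.inc e) {i j : ι} (hx : part x = some i)
    (hy : part y = some j) : i = j := by
  by_contra hij
  have hxy : x ≠ y := fun h => hij (Option.some_injective _ (hx.symm.trans (h ▸ hy)))
  exact (hbetween i j hij).subset ⟨x, y, (Sym2.mem_and_mem_iff hxy).1 ⟨hxe, hye⟩, hx, hy⟩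

theorem edgesBetween_none_eq_edgeBoundary
    (hbetween : ∀ i j, i ≠ j → G.edgesBetween (part ⁻¹' {some i}) (part ⁻¹' {some j}) = ∅) (i : ι) :
    G.edgesBetween (part ⁻¹' {some i}) (part ⁻¹' {none}) = G.edgeBoundary (part ⁻¹' {some i}) := by
  ext e
  refine exists₂_congr fun u v => and_congr_right fun huv => and_congr_right fun hu => ?_
  refine ⟨fun hv hv' => Option.some_ne_none i (hv'.symm.trans hv), fun hv => ?_⟩
  refine Option.eq_none_iff_forall_ne_some.2 fun j hj => hv ?_
  rw [Set.mem_preimage, hj, index_eq_of_mem_inc hbetween (huv ▸ Sym2.mem_mk_left u v)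
    (huv ▸ Sym2.mem_mk_right u v) hu hj]
  rfl

theorem edgesWithin_iUnion_eq
    (hbetween : ∀ i j, i ≠ j → G.edgesBetween (part ⁻¹' {some i}) (part ⁻¹' {some j}) = ∅) :
    G.edgesWithin (⋃ i, part ⁻¹' {some i}) = ⋃ i, G.edgesWithin (part ⁻¹' {some i}) := by
  refine subset_antisymm (fun e he => ?_)
    (Set.iUnion_subset fun i e he v hv => Set.mem_iUnion.2 ⟨i, he v hv⟩)
  obtain ⟨i, hi⟩ := Set.mem_iUnion.1 (he _ (Sym2.out_fst_mem _))
  refine Set.mem_iUnion.2 ⟨i, fun v hv => ?_⟩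
  obtain ⟨j, hj⟩ := Set.mem_iUnion.1 (he v hv)
  rwa [index_eq_of_mem_inc hbetween (Sym2.out_fst_mem _) hv hi hj]

theorem pairwise_disjoint_edgesMeeting
    (hbetween : ∀ i j, i ≠ j → G.edgesBetween (part ⁻¹' {some i}) (part ⁻¹' {some j}) = ∅) :
    Pairwise (Function.onFun Disjoint fun i => G.edgesMeeting (part ⁻¹' {some i})) := by
  refine fun i j hij => Set.disjoint_left.2 ?_
  rintro e ⟨x, hx, hxe⟩ ⟨y, hy, hye⟩
  exact hij (index_eq_of_mem_inc hbetween hxe hye hx hy)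

theorem disjoint_edgesWithin_none_edgesMeeting (i : ι) :
    Disjoint (G.edgesWithin (part ⁻¹' {none})) (G.edgesMeeting (part ⁻¹' {some i})) :=
  Set.disjoint_left.2 fun _ he ⟨x, hx, hxe⟩ => Option.some_ne_none i (hx.symm.trans (he x hxe))

theorem contractSetoid_iUnion_edgesWithin_iff
    (hclique : ∀ i, G.IsClique (part ⁻¹' {some i})) {i : ι} {x y : V} (hx : part x = some i) :
    G.contractSetoid (⋃ i, G.edgesWithin (part ⁻¹' {some i})) y x ↔ part y = some i := by
  refine ⟨fun h => ?_, fun hy => G.contractSetoid_mono (Set.subset_iUnion _ i)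
    ((hclique i).contractSetoid_edgesWithin hy hx)⟩
  have hle : G.contractSetoid (⋃ i, G.edgesWithin (part ⁻¹' {some i})) ≤ Setoid.ker part :=
    G.contractSetoid_le_iff.2 fun e he u v huv => by
      obtain ⟨j, hj⟩ := Set.mem_iUnion.1 he
      obtain ⟨hu, hv⟩ := (mem_edgesWithin_iff huv).1 hj
      exact hu.trans hv.symm
  exact (hle h).trans hx

end CliquePartition

end Multigraph

/-- with the vertex set partitioned into `V₀` (`= part ⁻¹' {none}`)
and cliques `V₁, …, V_k` (`Vᵢ = part ⁻¹' {some i}`), no edges between distinct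
cliques, and every component of `G[M]` a star with center in `V₀`, for any
`N ⊆ E(G[V₀])`:
`τ_G(M ∪ N) = ∏ᵢ |Vᵢ|^{|Vᵢ|−2−|Mᵢ|} · Σ_{T ∈ ST_{G•U}(N)} ∏ᵢ |Vᵢ|^{|E_T(vᵢ)|}`. -/
theorem tau_contract_cliques {V : Type u} {E : Type v} [Fintype V] [Fintype E]
    (G : Multigraph V E) (hconn : G.Connected) (hloop : G.Loopless)
    (k : ℕ) (part : V → Option (Fin k))
    (hne : ∀ i : Option (Fin k), (part ⁻¹' {i}).Nonempty)
    (hclique : ∀ i : Fin k, G.IsClique (part ⁻¹' {some i}))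
    (hbetween : ∀ i j : Fin k, i ≠ j →
      G.edgesBetween (part ⁻¹' {some i}) (part ⁻¹' {some j}) = ∅)
    (Mi : Fin k → Set E)
    (hMi : ∀ i, Mi i = G.edgesBetween (part ⁻¹' {some i}) (part ⁻¹' {none}))
    (M : Set E) (hM : M = ⋃ i, Mi i)
    (hstar : G.StarComponents M (part ⁻¹' {none}))
    (U : Set V) (hU : U = ⋃ i, part ⁻¹' {some i})
    (rep : Fin k → V) (hrep : ∀ i, rep i ∈ part ⁻¹' {some i})
    (N : Set E) (hN : N ⊆ G.edgesWithin (part ⁻¹' {none})) :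
    (G.tau (M ∪ N) : ℚ) =
      (∏ i, ((part ⁻¹' {some i}).ncard : ℚ) ^
        (((part ⁻¹' {some i}).ncard : ℤ) - 2 - ((Mi i).ncard : ℤ))) *
      ∑ᶠ T ∈ (G.contract (G.edgesWithin U)).ST (Subtype.val ⁻¹' N),
        ∏ i, ((part ⁻¹' {some i}).ncard : ℚ) ^
          ({e ∈ T | Quotient.mk (G.contractSetoid (G.edgesWithin U)) (rep i) ∈
            (G.contract (G.edgesWithin U)).inc e}).ncard := by
  classical
  have : Nonempty V := ⟨(hne none).some⟩
  have hboundary (i : Fin k) : Mi i = G.edgeBoundary (part ⁻¹' {some i}) :=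
    (hMi i).trans (edgesBetween_none_eq_edgeBoundary hbetween i)
  have hwithin : G.edgesWithin U = ⋃ i, G.edgesWithin (part ⁻¹' {some i}) :=
    hU ▸ edgesWithin_iUnion_eq hbetween
  have hNmeet (i : Fin k) : Disjoint N (G.edgesMeeting (part ⁻¹' {some i})) :=
    (disjoint_edgesWithin_none_edgesMeeting i).mono_left hN
  have hNU : Disjoint N (G.edgesWithin U) := hwithin ▸ Set.disjoint_iUnion_right.2 fun i =>
    (hNmeet i).mono_right edgesWithin_subset_edgesMeeting
  have hattach (i : Fin k) := hstar.exists_isAttachment (C := part ⁻¹' {some i})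
    (Disjoint.preimage part (by simp)) (hM ▸ hboundary i ▸ Set.subset_iUnion Mi i)
  have hdegree (i : Fin k) := ncard_incident_contract (hwithin ▸ Set.subset_iUnion _ i)
    fun y => hwithin ▸ contractSetoid_iUnion_edgesWithin_iff (y := y) hclique (hrep i)
  have key := card_trees_eq_sum_contract_cliques Finset.univ (fun i _ => hclique i)
    (fun i _ => hne (some i)) (fun i _ => hattach i)
    ((pairwise_disjoint_edgesMeeting hbetween).set_pairwise _) fun i _ => hNmeet i
  simp only [Finset.mem_univ, Set.iUnion_true, ← hwithin, ← hboundary] at key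
  rw [tau_eq_card_trees, hM, key, ← finsum_ST_contract _ hNU]
  simp only [hdegree, hboundary]

end PaperST
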